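/- arXiv:2305.00728 — 3 statements merged into one kernel-verified Lean document; each statement's English description precedes it below -/
import Mathlib

section
/- Let 0 < γ < 2. Then the radial principal eigenvalue λ̄'_γ(F) is strictly positive, and there exists a function u : [0,1] → ℝ, continuous on [0,1], twice continuously differentiable on (0,1), with u > 0 on [0,1) and u(1) = 0, satisfying F(D(u''(r), u'(r)/r)) + λ̄'_γ(F)·u(r)·r^{−γ} = 0 for all r ∈ (0,1). Moreover u is Lipschitz continuous on [0,1] if γ ≤ 1, is C¹ on [0,1) if γ < 1, and is Hölder continuous with exponent 2−γ on [0,1] if 1 < γ < 2. -/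
open Set Real Filter MeasureTheory Matrix

noncomputable section

/-- The `N × N` diagonal matrix with first diagonal entry `a` and the remaining
`N - 1` diagonal entries equal to `b`. -/
def Dmat (N : ℕ) (a b : ℝ) : Matrix (Fin N) (Fin N) ℝ :=
  Matrix.diagonal (fun i => if (i : ℕ) = 0 then a else b)

/-- Uniform ellipticity with constants `0 < lam ≤ Lam`. -/
def UnifElliptic (N : ℕ) (lam Lam : ℝ) (F : Matrix (Fin N) (Fin N) ℝ → ℝ) : Prop :=
  ∀ M P : Matrix (Fin N) (Fin N) ℝ, M.IsSymm → P.PosSemidef →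
    lam * P.trace ≤ F (M + P) - F M ∧ F (M + P) - F M ≤ Lam * P.trace

/-- Rotation invariance. -/
def RotInvariant (N : ℕ) (F : Matrix (Fin N) (Fin N) ℝ → ℝ) : Prop :=
  ∀ O M : Matrix (Fin N) (Fin N) ℝ, Oᵀ * O = 1 → F (Oᵀ * M * O) = F M

/-- Positive one-homogeneity. -/
def PosHomog (N : ℕ) (F : Matrix (Fin N) (Fin N) ℝ → ℝ) : Prop :=
  ∀ t : ℝ, 0 < t → ∀ M : Matrix (Fin N) (Fin N) ℝ, F (t • M) = t * F M

/-- The radial principal eigenvalue `λ̄'_γ(F)` on the punctured unit ball. -/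
def radialEV (N : ℕ) (F : Matrix (Fin N) (Fin N) ℝ → ℝ) (γ : ℝ) : ℝ :=
  sSup {μ : ℝ | ∃ u : ℝ → ℝ, ContDiffOn ℝ 2 u (Ioo 0 1) ∧
    (∀ r ∈ Ioo (0:ℝ) 1, 0 < u r) ∧
    (∀ r ∈ Ioo (0:ℝ) 1,
      F (Dmat N (deriv (deriv u) r) (deriv u r / r)) + μ * u r * r ^ (-γ) ≤ 0)}

/-!
With `β = 2 - γ`, the substitution `u r = U (μ * r ^ β)` turns the eigenvalue equation into the
singular initial value problem `t * U'' = g(U', U)`, `U 0 = 1`, which does not involve `μ`. It is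
solved by contraction in an exponentially weighted norm. The solution `U` is decreasing, and it
vanishes at a finite `T`, since `U / (-U')` satisfies a Riccati inequality which would drive it to
negative values. Hence `T` is an eigenvalue, with eigenfunction `U (T * r ^ β)`, whose regularity
is that of `r ^ β`.

It remains to see that there is no supersolution `v` for `μ > T`. In that case `w r = U (μ * r ^ β)`
solves the equation with the same `μ` and vanishes at some `R < 1`. Since `Ñ₊ ≥ 2`, ellipticity
gives `(r * W)' ≤ 0` wherever the Wronskian `W = v' * w - v * w'` is positive, so that positivity
of `W` at one point would propagate towards the origin and force `(v / w)' ≥ κ / r`, and therefore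
`v / w → -∞`, at the origin. Thus `W ≤ 0`, which contradicts `w R = 0` and `w' R < 0`.
-/

section Calculus

lemma le_of_deriv_nonpos_of_pos {g g' : ℝ → ℝ} {a b : ℝ} (hab : a ≤ b)
    (hg : ∀ x ∈ Icc a b, HasDerivAt g (g' x) x)
    (hg' : ∀ x ∈ Icc a b, 0 < g x → g' x ≤ 0) (hb : 0 < g b) : g b ≤ g a := by
  by_contra! hlt
  obtain ⟨m, ham, hmb⟩ : ∃ m, max (g a) 0 < m ∧ m < g b := exists_between (max_lt hlt hb)
  obtain ⟨hga, hm⟩ := max_lt_iff.1 ham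
  have barrier (ε : ℝ) (hε : 0 < ε) : g b ≤ m + ε * (b - a) := by
    refine image_le_of_deriv_right_lt_deriv_boundary (B := fun x ↦ m + ε * (x - a))
      (B' := fun _ ↦ ε) (fun x hx ↦ (hg x hx).continuousAt.continuousWithinAt)
      (fun x hx ↦ (hg x (Ico_subset_Icc_self hx)).hasDerivWithinAt) (by simpa using hga.le)
      (fun x ↦ by simpa using (((hasDerivAt_id x).sub_const a).const_mul ε).const_add m)
      (fun x hx hgx ↦ (hg' x (Ico_subset_Icc_self hx) ?_).trans_lt hε) (right_mem_Icc.2 hab)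
    have : 0 ≤ x - a := sub_nonneg.2 hx.1
    rw [hgx]
    positivity
  have hlim : Tendsto (fun ε ↦ m + ε * (b - a)) (nhdsWithin 0 (Ioi 0)) (nhds m) := by
    have : Continuous fun ε ↦ m + ε * (b - a) := by fun_prop
    simpa using (this.tendsto 0).mono_left nhdsWithin_le_nhds
  exact hmb.not_ge (ge_of_tendsto hlim (eventually_mem_nhdsWithin.mono barrier))

lemma not_monotoneOn_sub_log {φ : ℝ → ℝ} {κ b : ℝ} (hκ : 0 < κ) (hb : 0 < b)
    (hφ : ∀ r ∈ Ioc 0 b, 0 < φ r) : ¬ MonotoneOn (fun r ↦ φ r - κ * log r) (Ioc 0 b) := by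
  intro hmono
  have hlog : Tendsto (fun r ↦ κ * log r) (nhdsWithin 0 (Ioi 0)) atBot :=
    tendsto_log_nhdsGT_zero.const_mul_atBot hκ
  have hmem : ∀ᶠ r in nhdsWithin 0 (Ioi 0), r ∈ Ioc 0 b := Ioc_mem_nhdsGT hb
  obtain ⟨r, hr, hr_log⟩ :=
    (hmem.and (hlog.eventually (eventually_lt_atBot (κ * log b - φ b)))).exists
  have : φ r - κ * log r ≤ φ b - κ * log b := hmono hr (right_mem_Ioc.2 hb) hr.2
  linarith [hφ r hr]

lemma not_forall_le_mul_wronskian {v v₁ w w₁ : ℝ → ℝ} {b B δ : ℝ} (hb : 0 < b) (hδ : 0 < δ)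
    (hv : ∀ r ∈ Ioc 0 b, HasDerivAt v (v₁ r) r) (hw : ∀ r ∈ Ioc 0 b, HasDerivAt w (w₁ r) r)
    (hv0 : ∀ r ∈ Ioc 0 b, 0 < v r) (hw0 : ∀ r ∈ Ioc 0 b, 0 < w r)
    (hwB : ∀ r ∈ Ioc 0 b, w r ≤ B) : ¬ ∀ r ∈ Ioc 0 b, δ ≤ r * (v₁ r * w r - v r * w₁ r) := by
  intro hW
  have hB : 0 < B := (hw0 b (right_mem_Ioc.2 hb)).trans_le (hwB b (right_mem_Ioc.2 hb))
  have hquot (r : ℝ) (hr : r ∈ Ioc 0 b) :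
      HasDerivAt (fun r ↦ v r / w r - δ / B ^ 2 * log r)
        ((v₁ r * w r - v r * w₁ r) / w r ^ 2 - δ / B ^ 2 * r⁻¹) r :=
    ((hv r hr).div (hw r hr) (hw0 r hr).ne').sub ((hasDerivAt_log hr.1.ne').const_mul _)
  refine not_monotoneOn_sub_log (φ := fun r ↦ v r / w r) (κ := δ / B ^ 2) (by positivity) hb
    (fun r hr ↦ div_pos (hv0 r hr) (hw0 r hr)) ?_
  refine monotoneOn_of_hasDerivWithinAt_nonneg (convex_Ioc 0 b)
    (fun r hr ↦ (hquot r hr).continuousAt.continuousWithinAt)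
    (fun r hr ↦ (hquot r (interior_subset hr)).hasDerivWithinAt) fun r hr ↦ sub_nonneg.2 ?_
  have hr := interior_subset hr
  have hwr := hw0 r hr
  have hWr : δ / r ≤ v₁ r * w r - v r * w₁ r := (div_le_iff₀' hr.1).2 (hW r hr)
  calc δ / B ^ 2 * r⁻¹ = δ / r / B ^ 2 := by ring
    _ ≤ δ / r / w r ^ 2 := by
        have := div_pos hδ hr.1
        gcongr
        exact hwB r hr
    _ ≤ (v₁ r * w r - v r * w₁ r) / w r ^ 2 := by gcongr

lemma wronskian_nonpos {v v₁ v₂ w w₁ w₂ : ℝ → ℝ} {R B : ℝ}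
    (hv : ∀ r ∈ Ioo 0 R, HasDerivAt v (v₁ r) r) (hv₁ : ∀ r ∈ Ioo 0 R, HasDerivAt v₁ (v₂ r) r)
    (hw : ∀ r ∈ Ioo 0 R, HasDerivAt w (w₁ r) r) (hw₁ : ∀ r ∈ Ioo 0 R, HasDerivAt w₁ (w₂ r) r)
    (hv0 : ∀ r ∈ Ioo 0 R, 0 < v r) (hw0 : ∀ r ∈ Ioo 0 R, 0 < w r) (hwB : ∀ r ∈ Ioo 0 R, w r ≤ B)
    (hW : ∀ r ∈ Ioo 0 R, 0 < v₁ r * w r - v r * w₁ r →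
      r * (v₂ r * w r - v r * w₂ r) + (v₁ r * w r - v r * w₁ r) ≤ 0) :
    ∀ r ∈ Ioo 0 R, v₁ r * w r - v r * w₁ r ≤ 0 := by
  intro b hb
  by_contra! hpos
  have hsub {r : ℝ} (hr : r ∈ Ioc 0 b) : r ∈ Ioo 0 R := ⟨hr.1, hr.2.trans_lt hb.2⟩
  have hderiv (r : ℝ) (hr : r ∈ Ioo 0 R) : HasDerivAt (fun r ↦ r * (v₁ r * w r - v r * w₁ r))
      (r * (v₂ r * w r - v r * w₂ r) + (v₁ r * w r - v r * w₁ r)) r := by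
    convert! (hasDerivAt_id r).mul
      (((hv₁ r hr).mul (hw r hr)).sub ((hv r hr).mul (hw₁ r hr))) using 1
    simp only [id, Pi.sub_apply, Pi.mul_apply]
    ring
  refine not_forall_le_mul_wronskian hb.1 (mul_pos hb.1 hpos) (fun r hr ↦ hv r (hsub hr))
    (fun r hr ↦ hw r (hsub hr)) (fun r hr ↦ hv0 r (hsub hr)) (fun r hr ↦ hw0 r (hsub hr))
    (fun r hr ↦ hwB r (hsub hr)) fun r hr ↦ ?_
  have hmem {x : ℝ} (hx : x ∈ Icc r b) : x ∈ Ioo 0 R := hsub ⟨hr.1.trans_le hx.1, hx.2⟩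
  exact le_of_deriv_nonpos_of_pos hr.2 (fun x hx ↦ hderiv x (hmem hx))
    (fun x hx hx0 ↦ hW x (hmem hx) (pos_of_mul_pos_right hx0 (hmem hx).1.le)) (mul_pos hb.1 hpos)

lemma contDiffOn_two_of_hasDerivAt {w w₁ w₂ : ℝ → ℝ} {s : Set ℝ} (hs : IsOpen s)
    (hw : ∀ r ∈ s, HasDerivAt w (w₁ r) r) (hw₁ : ∀ r ∈ s, HasDerivAt w₁ (w₂ r) r)
    (hw₂ : ContinuousOn w₂ s) : ContDiffOn ℝ 2 w s := by
  have hC1 : ContDiffOn ℝ 1 w₁ s := by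
    rw [← zero_add 1, contDiffOn_succ_iff_deriv_of_isOpen hs]
    exact ⟨fun r hr ↦ (hw₁ r hr).differentiableAt.differentiableWithinAt, by simp,
      contDiffOn_zero.2 (hw₂.congr fun r hr ↦ (hw₁ r hr).deriv)⟩
  rw [← one_add_one_eq_two, contDiffOn_succ_iff_deriv_of_isOpen hs]
  exact ⟨fun r hr ↦ (hw r hr).differentiableAt.differentiableWithinAt, by simp,
    hC1.congr fun r hr ↦ (hw r hr).deriv⟩

lemma exists_first_zero {U : ℝ → ℝ} (hU : Continuous U) (h0 : 0 < U 0) {t : ℝ} (ht : 0 ≤ t)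
    (hUt : U t ≤ 0) : ∃ T, 0 < T ∧ U T = 0 ∧ ∀ s ∈ Ico 0 T, 0 < U s := by
  have hzero {s : ℝ} (hs : 0 ≤ s) (hUs : U s ≤ 0) : ∃ z ∈ Icc 0 s, U z = 0 :=
    intermediate_value_Icc' hs hU.continuousOn ⟨hUs, h0.le⟩
  have hcompact : IsCompact (Icc 0 t ∩ U ⁻¹' {0}) :=
    isCompact_Icc.inter_right (isClosed_singleton.preimage hU)
  obtain ⟨T, ⟨hT, hUT⟩, hleast⟩ := hcompact.exists_isLeast (hzero ht hUt)
  refine ⟨T, hT.1.lt_of_ne ?_, hUT, fun s hs ↦ ?_⟩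
  · rintro rfl
    exact h0.ne' hUT
  · by_contra! hUs
    obtain ⟨z, hz, hUz⟩ := hzero hs.1 hUs
    exact (hz.2.trans_lt hs.2).not_ge (hleast ⟨⟨hz.1, hz.2.trans (hs.2.le.trans hT.2)⟩, hUz⟩)

lemma abs_rpow_sub_rpow_le_mul {β x y : ℝ} (hβ : 1 ≤ β) (hx : x ∈ Icc 0 1) (hy : y ∈ Icc 0 1) :
    |x ^ β - y ^ β| ≤ β * |x - y| := by
  refine (convex_Icc (0 : ℝ) 1).norm_image_sub_le_of_norm_hasDerivWithin_le
    (f := fun r : ℝ ↦ r ^ β) (fun r _ ↦ (hasDerivAt_rpow_const (Or.inr hβ)).hasDerivWithinAt)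
    (fun r hr ↦ ?_) hy hx
  rw [norm_mul, norm_of_nonneg (by linarith), norm_of_nonneg (rpow_nonneg hr.1 _)]
  exact mul_le_of_le_one_right (by linarith) (rpow_le_one hr.1 hr.2 (by linarith))

lemma abs_rpow_sub_rpow_le_rpow_abs_sub {β x y : ℝ} (hβ0 : 0 ≤ β) (hβ1 : β ≤ 1) (hx : 0 ≤ x)
    (hy : 0 ≤ y) : |x ^ β - y ^ β| ≤ |x - y| ^ β := by
  wlog hyx : y ≤ x generalizing x y
  · rw [abs_sub_comm, abs_sub_comm x]
    exact this hy hx (le_of_not_ge hyx)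
  have hadd := rpow_add_le_add_rpow hy (sub_nonneg.2 hyx) hβ0 hβ1
  rw [add_sub_cancel] at hadd
  rw [abs_of_nonneg (sub_nonneg.2 hyx), abs_of_nonneg (sub_nonneg.2 (rpow_le_rpow hy hyx hβ0))]
  linarith

lemma exists_abs_comp_rpow_sub_le {U : ℝ → ℝ} (hU : ContDiff ℝ 1 U) {T β : ℝ} (hT : 0 ≤ T)
    (hβ : 0 ≤ β) : ∃ B, 0 ≤ B ∧ ∀ x ∈ Icc (0 : ℝ) 1, ∀ y ∈ Icc (0 : ℝ) 1,
      |U (T * x ^ β) - U (T * y ^ β)| ≤ B * |x ^ β - y ^ β| := by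
  obtain ⟨B, hB⟩ := (hU.locallyLipschitz.locallyLipschitzOn (s := Icc 0 T)
    ).exists_lipschitzOnWith_of_compact isCompact_Icc
  have hmem {x : ℝ} (hx : x ∈ Icc (0 : ℝ) 1) : T * x ^ β ∈ Icc 0 T :=
    ⟨mul_nonneg hT (rpow_nonneg hx.1 β), mul_le_of_le_one_right hT (rpow_le_one hx.1 hx.2 hβ)⟩
  refine ⟨B * T, by positivity, fun x hx y hy ↦ ?_⟩
  calc |U (T * x ^ β) - U (T * y ^ β)| ≤ B * |T * x ^ β - T * y ^ β| :=
        hB.dist_le_mul _ (hmem hx) _ (hmem hy)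
    _ = B * T * |x ^ β - y ^ β| := by rw [← mul_sub, abs_mul, abs_of_nonneg hT, mul_assoc]

end Calculus

section SingularIntegral

lemma exists_continuous_fixedPoint_of_weighted {X : Type*} [TopologicalSpace X] {ω : X → ℝ}
    (hω : Continuous ω) (hω0 : ∀ x, 0 < ω x) {A : (X → ℝ) → X → ℝ}
    (hA : ∀ p, Continuous p → Continuous (A p)) {θ B : ℝ} (hθ0 : 0 ≤ θ) (hθ1 : θ < 1)
    (hB : ∀ x, |A 0 x| ≤ B * ω x)
    (hAθ : ∀ p q D, Continuous p → Continuous q → (∀ x, |p x - q x| ≤ D * ω x) →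
      ∀ x, |A p x - A q x| ≤ θ * D * ω x) : ∃ p, Continuous p ∧ A p = p := by
  have hmul (q : BoundedContinuousFunction X ℝ) : Continuous (ω * ⇑q) := hω.mul q.continuous
  have hcontr (q q' : BoundedContinuousFunction X ℝ) (x : X) :
      |A (ω * ⇑q) x - A (ω * ⇑q') x| ≤ θ * dist q q' * ω x := by
    refine hAθ _ _ _ (hmul q) (hmul q') (fun y ↦ ?_) x
    rw [Pi.mul_apply, Pi.mul_apply, ← mul_sub, abs_mul, abs_of_pos (hω0 y), mul_comm]
    exact mul_le_mul_of_nonneg_right (q.dist_coe_le_dist y) (hω0 y).le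
  have hbound (q : BoundedContinuousFunction X ℝ) (x : X) :
      ‖A (ω * ⇑q) x / ω x‖ ≤ B + θ * dist q 0 := by
    rw [norm_div, Real.norm_eq_abs, norm_of_nonneg (hω0 x).le, div_le_iff₀ (hω0 x), add_mul]
    have h0 : |A (ω * ⇑q) x - A 0 x| ≤ θ * dist q 0 * ω x := by simpa using hcontr q 0 x
    linarith [hB x, abs_sub_abs_le_abs_sub (A (ω * ⇑q) x) (A 0 x)]
  let Φ (q : BoundedContinuousFunction X ℝ) : BoundedContinuousFunction X ℝ :=
    BoundedContinuousFunction.ofNormedAddCommGroup (fun x ↦ A (ω * ⇑q) x / ω x)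
      ((hA _ (hmul q)).div hω fun x ↦ (hω0 x).ne') _ (hbound q)
  have hΦ : ContractingWith θ.toNNReal Φ := by
    refine ⟨toNNReal_lt_one.2 hθ1, LipschitzWith.of_dist_le_mul fun q q' ↦ ?_⟩
    rw [coe_toNNReal _ hθ0, BoundedContinuousFunction.dist_le (by positivity)]
    intro x
    change |A (ω * ⇑q) x / ω x - A (ω * ⇑q') x / ω x| ≤ _
    rw [← sub_div, abs_div, abs_of_pos (hω0 x), div_le_iff₀ (hω0 x)]
    exact hcontr q q' x
  obtain ⟨q, hq⟩ : ∃ q, Φ q = q := ⟨_, hΦ.fixedPoint_isFixedPt⟩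
  refine ⟨ω * ⇑q, hmul q, funext fun x ↦ ?_⟩
  have hqx : A (ω * ⇑q) x / ω x = q x := DFunLike.congr_fun hq x
  rw [Pi.mul_apply, ← hqx, mul_div_cancel₀ _ (hω0 x).ne']

lemma continuous_uncurry_of_abs_sub_le {M : ℝ → ℝ → ℝ} {κ L : ℝ} (hκ : 0 ≤ κ) (hL : 0 ≤ L)
    (hM : ∀ p q u v, |M p u - M q v| ≤ κ * |p - q| + L * |u - v|) :
    Continuous (Function.uncurry M) := by
  refine (LipschitzWith.of_dist_le' (K := κ + L) fun x y ↦ (hM x.1 y.1 x.2 y.2).trans ?_).continuous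
  rw [add_mul]
  gcongr
  · exact le_max_left (dist x.1 y.1) (dist x.2 y.2)
  · exact le_max_right (dist x.1 y.1) (dist x.2 y.2)

lemma abs_integral_rpow_mul_le {h : ℝ → ℝ} {a D : ℝ} (ha : 0 ≤ a)
    (hD : ∀ σ ∈ Ioc (0 : ℝ) 1, |h σ| ≤ D) :
    |∫ σ in (0 : ℝ)..1, σ ^ a * h σ| ≤ D / (a + 1) := by
  have hint : ∫ σ in (0 : ℝ)..1, σ ^ a * D = D / (a + 1) := by
    rw [intervalIntegral.integral_mul_const, integral_rpow (Or.inl (by linarith)), one_rpow,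
      zero_rpow (by linarith)]
    ring
  rw [← hint, ← Real.norm_eq_abs]
  refine intervalIntegral.norm_integral_le_of_norm_le zero_le_one (ae_of_all _ fun σ hσ ↦ ?_)
    ((continuous_rpow_const ha).mul continuous_const |>.intervalIntegrable _ _)
  rw [norm_mul, norm_of_nonneg (rpow_nonneg hσ.1.le a)]
  exact mul_le_mul_of_nonneg_left (hD σ hσ) (rpow_nonneg hσ.1.le a)

lemma abs_integral_le_of_abs_le_exp {f : ℝ → ℝ} {C D : ℝ} (hC : 0 < C)
    (hf : ∀ x, |f x| ≤ D * exp (C * |x|)) (s : ℝ) :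
    |∫ τ in (0 : ℝ)..s, f τ| ≤ D / C * exp (C * |s|) := by
  wlog hs : 0 ≤ s generalizing f s
  · have := this (f := fun x ↦ f (-x)) (fun x ↦ by simpa using hf (-x)) (-s) (by linarith)
    rw [intervalIntegral.integral_comp_neg, neg_neg, neg_zero, abs_neg] at this
    rwa [intervalIntegral.integral_symm, abs_neg]
  have hD : 0 ≤ D := by simpa using (abs_nonneg _).trans (hf 0)
  have hint : ∫ τ in (0 : ℝ)..s, D * exp (C * τ) = D / C * (exp (C * s) - 1) := by
    rw [intervalIntegral.integral_const_mul,
      intervalIntegral.integral_comp_mul_left (fun x ↦ exp x) hC.ne', integral_exp]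
    simp only [mul_zero, exp_zero, smul_eq_mul]
    ring
  calc |∫ τ in (0 : ℝ)..s, f τ| ≤ ∫ τ in (0 : ℝ)..s, D * exp (C * τ) := by
        have hcont : Continuous fun τ ↦ D * exp (C * τ) := by fun_prop
        rw [← Real.norm_eq_abs]
        refine intervalIntegral.norm_integral_le_of_norm_le hs
          (ae_of_all _ fun τ hτ ↦ ?_) (hcont.intervalIntegrable _ _)
        simpa only [Real.norm_eq_abs, abs_of_pos hτ.1] using hf τ
    _ = D / C * (exp (C * s) - 1) := hint
    _ ≤ D / C * exp (C * |s|) := by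
        rw [abs_of_nonneg hs]
        gcongr
        linarith

/-- The Picard operator, acting on `p = U'`, of the singular initial value problem
`t U'' + (a + 1) U' = M(U', U)`, `U 0 = 1`. The equation is integrated against `t ^ a`, and the
integral rescaled to `[0, 1]` so that the operator also makes sense at `t = 0`. -/
def singularPicard (a : ℝ) (M : ℝ → ℝ → ℝ) (p : ℝ → ℝ) (t : ℝ) : ℝ :=
  ∫ σ in (0 : ℝ)..1, σ ^ a * M (p (σ * t)) (1 + ∫ τ in (0 : ℝ)..σ * t, p τ)

variable {a κ L : ℝ} {M : ℝ → ℝ → ℝ}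

lemma continuous_singularPicard_integrand (ha : 0 ≤ a) (hM : Continuous (Function.uncurry M))
    {p : ℝ → ℝ} (hp : Continuous p) : Continuous fun z : ℝ × ℝ ↦
      z.2 ^ a * M (p (z.2 * z.1)) (1 + ∫ τ in (0 : ℝ)..z.2 * z.1, p τ) := by
  have hP : Continuous fun s ↦ ∫ τ in (0 : ℝ)..s, p τ :=
    intervalIntegral.continuous_primitive hp.intervalIntegrable 0
  have hmul : Continuous fun z : ℝ × ℝ ↦ z.2 * z.1 := continuous_snd.mul continuous_fst
  exact ((continuous_rpow_const ha).comp continuous_snd).mul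
    (hM.comp ((hp.comp hmul).prodMk (continuous_const.add (hP.comp hmul))))

lemma continuous_singularPicard (ha : 0 ≤ a) (hM : Continuous (Function.uncurry M))
    {p : ℝ → ℝ} (hp : Continuous p) : Continuous (singularPicard a M p) :=
  intervalIntegral.continuous_parametric_intervalIntegral_of_continuous'
    (continuous_singularPicard_integrand ha hM hp) 0 1

lemma abs_singularPicard_sub_le (ha : 0 ≤ a) (hκ : 0 ≤ κ) (hL : 0 ≤ L)
    (hM : ∀ p q u v, |M p u - M q v| ≤ κ * |p - q| + L * |u - v|) {p q : ℝ → ℝ}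
    (hp : Continuous p) (hq : Continuous q) {C D : ℝ} (hC : 0 < C)
    (hpq : ∀ x, |p x - q x| ≤ D * exp (C * |x|)) (t : ℝ) :
    |singularPicard a M p t - singularPicard a M q t|
      ≤ (κ + L / C) / (a + 1) * D * exp (C * |t|) := by
  have hMc := continuous_uncurry_of_abs_sub_le hκ hL hM
  have hD : 0 ≤ D := by simpa using (abs_nonneg _).trans (hpq 0)
  have hprim (s : ℝ) :
      |(1 + ∫ τ in (0 : ℝ)..s, p τ) - (1 + ∫ τ in (0 : ℝ)..s, q τ)| ≤ D / C * exp (C * |s|) := by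
    rw [add_sub_add_left_eq_sub, ← intervalIntegral.integral_sub (hp.intervalIntegrable _ _)
      (hq.intervalIntegrable _ _)]
    exact abs_integral_le_of_abs_le_exp hC hpq s
  have hint {p : ℝ → ℝ} (hp : Continuous p) : IntervalIntegrable
      (fun σ ↦ σ ^ a * M (p (σ * t)) (1 + ∫ τ in (0 : ℝ)..σ * t, p τ)) volume 0 1 :=
    ((continuous_singularPicard_integrand ha hMc hp).comp
      (Continuous.prodMk_right t)).intervalIntegrable 0 1
  rw [singularPicard, singularPicard, ← intervalIntegral.integral_sub (hint hp) (hint hq)]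
  simp only [← mul_sub]
  refine (abs_integral_rpow_mul_le (D := (κ * D + L * (D / C)) * exp (C * |t|)) ha
    fun σ hσ ↦ ?_).trans_eq (by ring)
  have hexp : exp (C * |σ * t|) ≤ exp (C * |t|) := by
    rw [abs_mul, abs_of_pos hσ.1]
    gcongr
    exact mul_le_of_le_one_left (abs_nonneg t) hσ.2
  calc _ ≤ κ * (D * exp (C * |σ * t|)) + L * (D / C * exp (C * |σ * t|)) :=
        (hM _ _ _ _).trans (by gcongr; exacts [hpq _, hprim _])
    _ = (κ * D + L * (D / C)) * exp (C * |σ * t|) := by ring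
    _ ≤ (κ * D + L * (D / C)) * exp (C * |t|) := by gcongr

lemma exists_continuous_singularPicard_eq (ha : 0 ≤ a) (hκ : 0 ≤ κ) (hκa : κ < a + 1) (hL : 0 ≤ L)
    (hM : ∀ p q u v, |M p u - M q v| ≤ κ * |p - q| + L * |u - v|) :
    ∃ p, Continuous p ∧ singularPicard a M p = p := by
  obtain ⟨C, hC⟩ := exists_gt (L / (a + 1 - κ))
  have hC0 : 0 < C := (div_nonneg hL (by linarith)).trans_lt hC
  have hLC : L / C < a + 1 - κ := by rwa [div_lt_comm₀ (by linarith) hC0] at hC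
  refine exists_continuous_fixedPoint_of_weighted (ω := fun t ↦ exp (C * |t|))
    (θ := (κ + L / C) / (a + 1)) (B := |M 0 1| / (a + 1)) (by fun_prop) (fun t ↦ exp_pos _)
    (fun p ↦ continuous_singularPicard ha (continuous_uncurry_of_abs_sub_le hκ hL hM))
    (by positivity) ((div_lt_one (by linarith)).2 (by linarith)) (fun t ↦ ?_)
    fun p q D hp hq hpq ↦ abs_singularPicard_sub_le ha hκ hL hM hp hq hC0 hpq
  have hexp : 1 ≤ exp (C * |t|) := one_le_exp (by positivity)
  refine (abs_integral_rpow_mul_le (D := |M 0 1|) ha fun σ _ ↦ by simp).trans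
    (le_mul_of_one_le_right (by positivity) hexp)

end SingularIntegral

section SingularInitialValueProblem

/-- A nonlinearity `g`, written `g U' U`, which is nonincreasing in the first variable at a rate
between `m` and `K`, Lipschitz in the second one, and which drives a nonnegative `U` at rest
downwards at rate at least `c`. -/
structure IsDamped (g : ℝ → ℝ → ℝ) (m K L c : ℝ) : Prop where
  damping_pos : 0 < m
  one_le : 1 ≤ K
  source_pos : 0 < c
  sub_le : ∀ {p q : ℝ} (u : ℝ), q ≤ p → g p u - g q u ≤ -m * (p - q)
  le_sub : ∀ {p q : ℝ} (u : ℝ), q ≤ p → -K * (p - q) ≤ g p u - g q u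
  lipschitz : ∀ p u v : ℝ, |g p u - g p v| ≤ L * |u - v|
  source : ∀ {u : ℝ}, 0 ≤ u → g 0 u ≤ -c * u

/-- `U`, with derivative `p`, is the regular solution of the singular initial value problem
`t U'' = g(U', U)`, `U 0 = 1`. The equation is encoded by the fixed point equation of
`singularPicard (K - 1) (fun p u ↦ g p u + K * p)`, which also selects the solutions that are
regular at `t = 0`. -/
structure IsRegularSolution (g : ℝ → ℝ → ℝ) (K : ℝ) (U p : ℝ → ℝ) : Prop where
  continuous_deriv : Continuous p
  hasDerivAt : ∀ t, HasDerivAt U (p t) t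
  initial : U 0 = 1
  integral_eq : ∀ t,
    p t = ∫ σ in (0 : ℝ)..1, σ ^ (K - 1) * (g (p (σ * t)) (U (σ * t)) + K * p (σ * t))

variable {g : ℝ → ℝ → ℝ} {m K L c : ℝ} {U p : ℝ → ℝ}

namespace IsDamped

lemma damping_le (hg : IsDamped g m K L c) : m ≤ K := by
  linarith [hg.sub_le 0 zero_le_one, hg.le_sub 0 zero_le_one]

lemma lipschitz_nonneg (hg : IsDamped g m K L c) : 0 ≤ L := by
  simpa using (abs_nonneg _).trans (hg.lipschitz 0 1 0)

lemma abs_add_mul_sub_le (hg : IsDamped g m K L c) (p q u v : ℝ) :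
    |g p u + K * p - (g q v + K * q)| ≤ (K - m) * |p - q| + L * |u - v| := by
  wlog hqp : q ≤ p generalizing p q u v
  · rw [abs_sub_comm, abs_sub_comm p, abs_sub_comm u]
    exact this q p v u (le_of_not_ge hqp)
  have hfirst : |g p u - g q u + K * (p - q)| ≤ (K - m) * |p - q| := by
    rw [abs_of_nonneg (sub_nonneg.2 hqp), abs_of_nonneg (by linarith [hg.le_sub u hqp])]
    linarith [hg.sub_le u hqp]
  calc |g p u + K * p - (g q v + K * q)|
      = |(g p u - g q u + K * (p - q)) + (g q u - g q v)| := by ring_nf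
    _ ≤ (K - m) * |p - q| + L * |u - v| :=
        (abs_add_le _ _).trans (add_le_add hfirst (hg.lipschitz q u v))

lemma continuous_uncurry (hg : IsDamped g m K L c) : Continuous (Function.uncurry g) := by
  have hM := continuous_uncurry_of_abs_sub_le (M := fun p u ↦ g p u + K * p)
    (sub_nonneg.2 hg.damping_le) hg.lipschitz_nonneg hg.abs_add_mul_sub_le
  have hg_eq : Function.uncurry g = fun z ↦ (g z.1 z.2 + K * z.1) - K * z.1 := by
    ext z
    simp [Function.uncurry]
  rw [hg_eq]
  exact hM.sub (continuous_const.mul continuous_fst)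

lemma exists_isRegularSolution (hg : IsDamped g m K L c) : ∃ U p, IsRegularSolution g K U p := by
  obtain ⟨p, hp, hpic⟩ := exists_continuous_singularPicard_eq (a := K - 1)
    (M := fun p u ↦ g p u + K * p) (sub_nonneg.2 hg.one_le) (sub_nonneg.2 hg.damping_le)
    (by linarith [hg.damping_pos]) hg.lipschitz_nonneg hg.abs_add_mul_sub_le
  refine ⟨fun t ↦ 1 + ∫ τ in (0 : ℝ)..t, p τ, p, hp, fun t ↦ ?_, by simp,
    fun t ↦ (congrFun hpic t).symm⟩
  exact (intervalIntegral.integral_hasDerivAt_right (hp.intervalIntegrable _ _)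
    (hp.stronglyMeasurableAtFilter _ _) hp.continuousAt).const_add 1

end IsDamped

namespace IsRegularSolution

lemma continuous (hU : IsRegularSolution g K U p) : Continuous U :=
  continuous_iff_continuousAt.2 fun t ↦ (hU.hasDerivAt t).continuousAt

lemma contDiff (hU : IsRegularSolution g K U p) : ContDiff ℝ 1 U :=
  contDiff_one_iff_deriv.2 ⟨fun t ↦ (hU.hasDerivAt t).differentiableAt, by
    rw [funext fun t ↦ (hU.hasDerivAt t).deriv]
    exact hU.continuous_deriv⟩

lemma continuous_integrand (hU : IsRegularSolution g K U p) (hg : Continuous (Function.uncurry g))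
    (hK : 1 ≤ K) {s : ℝ → ℝ} (hs : Continuous s) :
    Continuous fun σ ↦ σ ^ (K - 1) * (g (p (s σ)) (U (s σ)) + K * p (s σ)) := by
  have hp := hU.continuous_deriv.comp hs
  exact (continuous_rpow_const (sub_nonneg.2 hK)).mul
    ((hg.comp (hp.prodMk (hU.continuous.comp hs))).add (continuous_const.mul hp))

lemma rpow_mul_eq_integral (hU : IsRegularSolution g K U p) {s : ℝ} (hs : 0 < s) :
    s ^ K * p s = ∫ τ in (0 : ℝ)..s, τ ^ (K - 1) * (g (p τ) (U τ) + K * p τ) := by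
  have hscale := intervalIntegral.smul_integral_comp_mul_right (a := 0) (b := 1)
    (fun τ ↦ τ ^ (K - 1) * (g (p τ) (U τ) + K * p τ)) s
  rw [zero_mul, one_mul] at hscale
  rw [← hscale, hU.integral_eq s, smul_eq_mul, ← sub_add_cancel K 1, rpow_add_one hs.ne',
    add_sub_cancel_right, mul_comm (s ^ (K - 1)), mul_assoc, ← intervalIntegral.integral_const_mul]
  congr 1
  refine intervalIntegral.integral_congr fun σ hσ ↦ ?_
  rw [uIcc_of_le zero_le_one] at hσ
  simp only [mul_rpow hσ.1 hs.le]
  ring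

lemma hasDerivAt_deriv (hU : IsRegularSolution g K U p) (hg : Continuous (Function.uncurry g))
    (hK : 1 ≤ K) {t : ℝ} (ht : 0 < t) : HasDerivAt p (g (p t) (U t) / t) t := by
  have hcont := hU.continuous_integrand hg hK continuous_id
  have hint : HasDerivAt (fun s ↦ ∫ τ in (0 : ℝ)..s, τ ^ (K - 1) * (g (p τ) (U τ) + K * p τ))
      (t ^ (K - 1) * (g (p t) (U t) + K * p t)) t :=
    intervalIntegral.integral_hasDerivAt_right (hcont.intervalIntegrable _ _)
      (hcont.stronglyMeasurableAtFilter _ _) hcont.continuousAt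
  have hrep : p =ᶠ[nhds t] fun s ↦
      s ^ (-K) * ∫ τ in (0 : ℝ)..s, τ ^ (K - 1) * (g (p τ) (U τ) + K * p τ) := by
    filter_upwards [lt_mem_nhds ht] with s hs
    rw [← hU.rpow_mul_eq_integral hs, ← mul_assoc, ← rpow_add hs, neg_add_cancel, rpow_zero,
      one_mul]
  refine HasDerivAt.congr_of_eventuallyEq ?_ hrep
  convert! (hasDerivAt_rpow_const (p := -K) (Or.inl ht.ne')).mul hint using 1
  have htK : t ^ K ≠ 0 := (rpow_pos_of_pos ht K).ne'
  rw [← hU.rpow_mul_eq_integral ht, rpow_sub_one ht.ne', rpow_sub_one ht.ne', rpow_neg ht.le]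
  field_simp
  ring

lemma deriv_neg (hU : IsRegularSolution g K U p) (hg : IsDamped g m K L c) {T : ℝ} (hT : 0 < T)
    (hpos : ∀ t ∈ Ico 0 T, 0 < U t) : ∀ t ∈ Icc 0 T, p t < 0 := by
  intro t ht
  by_contra! hpt
  obtain ⟨t₁, ht₁, hmax⟩ :=
    isCompact_Icc.exists_isMaxOn (nonempty_Icc.2 hT.le) hU.continuous_deriv.continuousOn
  have hp₁ : 0 ≤ p t₁ := hpt.trans (hmax ht)
  have hK := hg.one_le
  have hlt (σ : ℝ) (hσ : σ ∈ Ioo (0 : ℝ) 1) :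
      g (p (σ * t₁)) (U (σ * t₁)) + K * p (σ * t₁) < K * p t₁ := by
    have hσt : σ * t₁ ∈ Ico 0 T := by
      refine ⟨mul_nonneg hσ.1.le ht₁.1, ?_⟩
      nlinarith [hσ.1, hσ.2, ht₁.1, ht₁.2]
    have hu := hpos _ hσt
    have hle := hg.le_sub (U (σ * t₁)) (hmax (Ico_subset_Icc_self hσt))
    have hrest := hg.sub_le (U (σ * t₁)) hp₁
    have hsource := hg.source hu.le
    nlinarith [mul_pos hg.source_pos hu, mul_nonneg hg.damping_pos.le hp₁]
  have hmajorant : ∫ σ in (0 : ℝ)..1, σ ^ (K - 1) * (K * p t₁) = p t₁ := by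
    rw [intervalIntegral.integral_mul_const, integral_rpow (Or.inl (by linarith)),
      sub_add_cancel, one_rpow, zero_rpow (by linarith)]
    field_simp
    ring
  have hcont := hU.continuous_integrand hg.continuous_uncurry hK (continuous_mul_const t₁)
  have hcont' : Continuous fun σ : ℝ ↦ σ ^ (K - 1) * (K * p t₁) :=
    (continuous_rpow_const (sub_nonneg.2 hK)).mul continuous_const
  have hgap : 0 < ∫ σ in (0 : ℝ)..1, (σ ^ (K - 1) * (K * p t₁)
      - σ ^ (K - 1) * (g (p (σ * t₁)) (U (σ * t₁)) + K * p (σ * t₁))) := by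
    refine intervalIntegral.intervalIntegral_pos_of_pos_on
      ((hcont'.sub hcont).intervalIntegrable _ _) (fun σ hσ ↦ ?_) zero_lt_one
    exact sub_pos.2 (mul_lt_mul_of_pos_left (hlt σ hσ) (rpow_pos_of_pos hσ.1 _))
  rw [intervalIntegral.integral_sub (hcont'.intervalIntegrable _ _)
    (hcont.intervalIntegrable _ _), hmajorant, ← hU.integral_eq] at hgap
  exact (sub_pos.1 hgap).false

-- `z = U / (-U')` satisfies the Riccati inequality `z' ≤ -1 + (K z - c z ^ 2) / t`.
lemma hasDerivAt_div_neg_deriv_le (hU : IsRegularSolution g K U p) (hg : IsDamped g m K L c)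
    {t : ℝ} (ht : K ^ 2 / (2 * c) ≤ t) (hUt : 0 ≤ U t) (hpt : p t < 0) :
    ∃ z', HasDerivAt (fun s ↦ U s / -p s) z' t ∧ z' ≤ -(1 / 2) := by
  have hc := hg.source_pos
  have hK : 0 < K := by linarith [hg.one_le]
  have ht0 : 0 < t := (by positivity : 0 < K ^ 2 / (2 * c)).trans_le ht
  refine ⟨_, (hU.hasDerivAt t).div
    (hU.hasDerivAt_deriv hg.continuous_uncurry hg.one_le ht0).neg (neg_pos.2 hpt).ne', ?_⟩
  have hrest : g (p t) (U t) ≤ -c * U t - K * p t := by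
    linarith [hg.le_sub (U t) hpt.le, hg.source hUt]
  have hcontrol : U t * g (p t) (U t) ≤ t * p t ^ 2 / 2 := by
    have hKt : K ^ 2 ≤ 2 * c * t := by rwa [div_le_iff₀' (by positivity)] at ht
    refine (mul_le_mul_of_nonneg_left hrest hUt).trans ?_
    refine le_of_mul_le_mul_left ?_ (by positivity : 0 < 4 * c)
    nlinarith [sq_nonneg (2 * c * U t + K * p t), mul_le_mul_of_nonneg_right hKt (sq_nonneg (p t))]
  have hpne := hpt.ne
  calc (p t * -p t - U t * -(g (p t) (U t) / t)) / (-p t) ^ 2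
      = -1 + U t * g (p t) (U t) / (t * p t ^ 2) := by
        field_simp
        ring
    _ ≤ -1 + t * p t ^ 2 / 2 / (t * p t ^ 2) := by gcongr
    _ = -(1 / 2) := by
        field_simp
        norm_num

lemma exists_nonpos (hU : IsRegularSolution g K U p) (hg : IsDamped g m K L c) :
    ∃ t, 0 ≤ t ∧ U t ≤ 0 := by
  by_contra! hpos
  have hneg (t : ℝ) (ht : 0 ≤ t) : p t < 0 :=
    hU.deriv_neg hg (by linarith : 0 < t + 1) (fun s hs ↦ hpos s hs.1) t ⟨ht, by linarith⟩
  have hc := hg.source_pos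
  obtain ⟨t₀, ht₀⟩ : ∃ t₀, t₀ = K ^ 2 / (2 * c) := ⟨_, rfl⟩
  have ht₀0 : 0 ≤ t₀ := ht₀ ▸ by positivity
  set z : ℝ → ℝ := fun t ↦ U t / -p t
  have hz (t : ℝ) (ht : 0 ≤ t) : 0 < z t := div_pos (hpos t ht) (neg_pos.2 (hneg t ht))
  have hderiv (t : ℝ) (ht : t₀ ≤ t) : ∃ z', HasDerivAt z z' t ∧ z' ≤ -(1 / 2) :=
    hU.hasDerivAt_div_neg_deriv_le hg (ht₀ ▸ ht) (hpos t (ht₀0.trans ht)).le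
      (hneg t (ht₀0.trans ht))
  have hdecay : z (t₀ + 2 * z t₀) - z t₀ ≤ -(1 / 2) * (t₀ + 2 * z t₀ - t₀) := by
    refine (convex_Ici t₀).image_sub_le_mul_sub_of_deriv_le (f := z)
      (fun t ht ↦ ?_) (fun t ht ↦ ?_) (fun t ht ↦ ?_) t₀ self_mem_Ici _ ?_ ?_
    · obtain ⟨z', hz', -⟩ := hderiv t ht
      exact hz'.continuousAt.continuousWithinAt
    · obtain ⟨z', hz', -⟩ := hderiv t (interior_subset ht)
      exact hz'.differentiableAt.differentiableWithinAt
    · obtain ⟨z', hz', hle⟩ := hderiv t (interior_subset ht)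
      rwa [hz'.deriv]
    · exact mem_Ici.2 (by linarith [hz t₀ ht₀0])
    · linarith [hz t₀ ht₀0]
  linarith [hz (t₀ + 2 * z t₀) (by linarith [hz t₀ ht₀0])]

lemma exists_first_zero (hU : IsRegularSolution g K U p) (hg : IsDamped g m K L c) :
    ∃ T, 0 < T ∧ U T = 0 ∧ ∀ t ∈ Ico 0 T, 0 < U t := by
  obtain ⟨t, ht, hUt⟩ := hU.exists_nonpos hg
  exact _root_.exists_first_zero hU.continuous (by rw [hU.initial]; exact one_pos) ht hUt

end IsRegularSolution

end SingularInitialValueProblem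

section RadialElliptic

/-- A uniformly elliptic, positively homogeneous operator acting on radial functions: `f a b` stands
for its value at the Hessian with eigenvalue `a = u''` in the radial direction and `b = u' / r`,
with total multiplicity `n`, in the tangential ones. -/
structure IsRadialElliptic (f : ℝ → ℝ → ℝ) (lam Lam n : ℝ) : Prop where
  lam_pos : 0 < lam
  n_pos : 0 < n
  le_sub : ∀ {a b a' b' : ℝ}, a ≤ a' → b ≤ b' →
    lam * ((a' - a) + n * (b' - b)) ≤ f a' b' - f a b
  sub_le : ∀ {a b a' b' : ℝ}, a ≤ a' → b ≤ b' →
    f a' b' - f a b ≤ Lam * ((a' - a) + n * (b' - b))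
  homog : ∀ {t : ℝ} (a b : ℝ), 0 < t → f (t * a) (t * b) = t * f a b

namespace IsRadialElliptic

variable {f : ℝ → ℝ → ℝ} {lam Lam n a b a' b' : ℝ}

lemma apply_zero_zero (hf : IsRadialElliptic f lam Lam n) : f 0 0 = 0 := by
  have h2 := hf.homog 0 0 two_pos
  simp only [mul_zero] at h2
  linarith

lemma lam_le_Lam (hf : IsRadialElliptic f lam Lam n) : lam ≤ Lam := by
  have hl := hf.le_sub (a := 0) (a' := 1) zero_le_one (le_refl 0)
  have hL := hf.sub_le (a := 0) (a' := 1) zero_le_one (le_refl 0)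
  linarith

lemma Lam_pos (hf : IsRadialElliptic f lam Lam n) : 0 < Lam :=
  hf.lam_pos.trans_le hf.lam_le_Lam

lemma ratio_mul_le (hf : IsRadialElliptic f lam Lam n) : lam / Lam * n ≤ n :=
  mul_le_of_le_one_left hf.n_pos.le ((div_le_one hf.Lam_pos).2 hf.lam_le_Lam)

lemma le_ratio_mul (hf : IsRadialElliptic f lam Lam n) : n ≤ Lam / lam * n :=
  le_mul_of_one_le_left hf.n_pos.le ((one_le_div hf.lam_pos).2 hf.lam_le_Lam)

lemma mul_sub_le_sub (hf : IsRadialElliptic f lam Lam n) (b : ℝ) (ha : a' ≤ a) :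
    lam * (a - a') ≤ f a b - f a' b := by
  simpa using hf.le_sub ha (le_refl b)

lemma abs_sub_le_div (hf : IsRadialElliptic f lam Lam n) :
    |a - a'| ≤ |f a b - f a' b| / lam := by
  wlog ha : a' ≤ a generalizing a a'
  · rw [abs_sub_comm, abs_sub_comm (f a b)]
    exact this (le_of_not_ge ha)
  rw [le_div_iff₀' hf.lam_pos, abs_of_nonneg (sub_nonneg.2 ha)]
  exact (hf.mul_sub_le_sub b ha).trans (le_abs_self _)

lemma continuous_left (hf : IsRadialElliptic f lam Lam n) (b : ℝ) : Continuous (f · b) := by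
  refine (LipschitzWith.of_dist_le' (K := Lam) fun x y ↦ ?_).continuous
  wlog hyx : y ≤ x generalizing x y
  · rw [dist_comm, dist_comm x]
    exact this y x (le_of_not_ge hyx)
  have hmono := (mul_nonneg hf.lam_pos.le (sub_nonneg.2 hyx)).trans (hf.mul_sub_le_sub b hyx)
  rw [Real.dist_eq, Real.dist_eq, abs_of_nonneg hmono, abs_of_nonneg (sub_nonneg.2 hyx)]
  simpa using hf.sub_le hyx (le_refl b)

lemma surjective_left (hf : IsRadialElliptic f lam Lam n) (b : ℝ) :
    Function.Surjective (f · b) := by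
  refine (hf.continuous_left b).surjective ?_ ?_
  · refine tendsto_atTop_mono' _ ?_ (tendsto_atTop_add_const_right _ (f 0 b)
      (tendsto_id.const_mul_atTop hf.lam_pos))
    filter_upwards [eventually_ge_atTop 0] with a ha
    simpa [le_sub_iff_add_le] using hf.mul_sub_le_sub b ha
  · refine tendsto_atBot_mono' _ ?_ (tendsto_atBot_add_const_right _ (f 0 b)
      (tendsto_id.const_mul_atBot hf.lam_pos))
    filter_upwards [eventually_le_atBot 0] with a ha
    have := hf.mul_sub_le_sub b ha
    simp only [id]
    linarith

lemma sub_le_of_apply_le (hf : IsRadialElliptic f lam Lam n) (hb : b' ≤ b)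
    (hle : f a b ≤ f a' b') : a - a' ≤ -(lam / Lam * n) * (b - b') := by
  have hb0 := sub_nonneg.2 hb
  rcases le_total a' a with ha | ha
  · have hsum : a - a' + n * (b - b') ≤ 0 :=
      nonpos_of_mul_nonpos_right ((hf.le_sub ha hb).trans (sub_nonpos.2 hle)) hf.lam_pos
    nlinarith [mul_le_mul_of_nonneg_right hf.ratio_mul_le hb0]
  · have hlow := hf.le_sub (le_refl a) hb
    have hupp := hf.sub_le ha (le_refl b')
    have hratio : lam / Lam * n * (b - b') ≤ a' - a := by
      rw [div_mul_eq_mul_div, div_mul_eq_mul_div, div_le_iff₀' hf.Lam_pos]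
      linarith
    linarith

lemma neg_mul_le_sub_of_apply_le (hf : IsRadialElliptic f lam Lam n) (hb : b' ≤ b)
    (hle : f a' b' ≤ f a b) : -(Lam / lam * n) * (b - b') ≤ a - a' := by
  have hb0 := sub_nonneg.2 hb
  rcases le_total a' a with ha | ha
  · linarith [mul_nonneg (hf.n_pos.le.trans hf.le_ratio_mul) hb0]
  · have hupp := hf.sub_le (le_refl a) hb
    have hlow := hf.mul_sub_le_sub b' ha
    have hratio : a' - a ≤ Lam / lam * n * (b - b') := by
      rw [div_mul_eq_mul_div, div_mul_eq_mul_div, le_div_iff₀' hf.lam_pos]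
      linarith
    linarith

lemma le_neg_div_of_apply_zero_eq (hf : IsRadialElliptic f lam Lam n) {c : ℝ} (hc : 0 ≤ c)
    (ha : f a 0 = -c) : a ≤ -(c / Lam) := by
  have ha0 : a ≤ 0 := by
    by_contra! hpos
    have := hf.mul_sub_le_sub 0 hpos.le
    rw [ha, hf.apply_zero_zero] at this
    nlinarith [mul_pos hf.lam_pos hpos]
  have hupp := hf.sub_le ha0 (le_refl 0)
  rw [ha, hf.apply_zero_zero] at hupp
  rw [le_neg, div_le_iff₀' hf.Lam_pos]
  linarith

-- The operator is solved for `u''`: with `u r = U (μ * r ^ β)` and `t = μ * r ^ β`, the equation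
-- `f (u'') (u' / r) + μ * r ^ (β - 2) * u = 0` becomes `t * U'' = g U' U`, whatever `μ` is.
lemma exists_isDamped (hf : IsRadialElliptic f lam Lam n) (hn : 1 ≤ lam / Lam * n) {β : ℝ}
    (hβ : 0 < β) : ∃ g, IsDamped g ((lam / Lam * n + β - 1) / β) ((Lam / lam * n + β - 1) / β)
      (1 / (lam * β ^ 2)) (1 / (Lam * β ^ 2)) ∧
      ∀ p u, f (β * ((β - 1) * p + β * g p u)) (β * p) = -u := by
  choose G hG using fun b ↦ hf.surjective_left b
  have hl := hf.lam_pos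
  have hL := hf.Lam_pos
  refine ⟨fun p u ↦ (G p (-(u / β)) - (β - 1) * p) / β, ⟨?_, ?_, by positivity, ?_, ?_, ?_, ?_⟩, ?_⟩
  · exact div_pos (by linarith) hβ
  · rw [one_le_div hβ]
    linarith [hf.ratio_mul_le, hf.le_ratio_mul]
  · intro p q u hqp
    have hcmp := hf.sub_le_of_apply_le hqp ((hG p (-(u / β))).trans (hG q (-(u / β))).symm).le
    rw [← sub_div, ← neg_div β (lam / Lam * n + β - 1), div_mul_eq_mul_div _ β]
    refine (div_le_div_iff_of_pos_right hβ).2 ?_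
    linarith
  · intro p q u hqp
    have hcmp := hf.neg_mul_le_sub_of_apply_le hqp
      ((hG q (-(u / β))).trans (hG p (-(u / β))).symm).le
    rw [← sub_div, ← neg_div β (Lam / lam * n + β - 1), div_mul_eq_mul_div _ β]
    refine (div_le_div_iff_of_pos_right hβ).2 ?_
    linarith
  · intro p u v
    have habs := hf.abs_sub_le_div (a := G p (-(u / β))) (a' := G p (-(v / β))) (b := p)
    simp only at hG
    rw [hG, hG, neg_sub_neg, ← sub_div, abs_div, abs_of_pos hβ, abs_sub_comm v] at habs
    rw [← sub_div, sub_sub_sub_cancel_right, abs_div, abs_of_pos hβ, div_le_iff₀ hβ]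
    refine habs.trans_eq ?_
    field_simp
  · intro u hu
    have hle := hf.le_neg_div_of_apply_zero_eq (div_nonneg hu hβ.le) (hG 0 (-(u / β)))
    rw [mul_zero, sub_zero, div_le_iff₀ hβ]
    refine hle.trans_eq ?_
    field_simp
  · intro p u
    have harg : β * ((β - 1) * p + β * ((G p (-(u / β)) - (β - 1) * p) / β))
        = β * G p (-(u / β)) := by
      field_simp
      ring
    have hGp : f (G p (-(u / β))) p = -(u / β) := hG p _
    rw [harg, hf.homog _ _ hβ, hGp]
    field_simp

lemma wronskian_deriv_le (hf : IsRadialElliptic f lam Lam n) (hn : 1 ≤ lam / Lam * n)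
    {r ν v v₁ v₂ w w₁ w₂ : ℝ} (hr : 0 < r) (hv : 0 < v) (hw : 0 < w)
    (hfv : f v₂ (v₁ / r) ≤ -(ν * v)) (hfw : -(ν * w) ≤ f w₂ (w₁ / r))
    (hpos : 0 < v₁ * w - v * w₁) : r * (v₂ * w - v * w₂) + (v₁ * w - v * w₁) ≤ 0 := by
  have hf_le : f (w * v₂) (w * (v₁ / r)) ≤ f (v * w₂) (v * (w₁ / r)) := by
    rw [hf.homog _ _ hw, hf.homog _ _ hv]
    nlinarith [mul_le_mul_of_nonneg_left hfv hw.le, mul_le_mul_of_nonneg_left hfw hv.le]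
  have hsub : w * (v₁ / r) - v * (w₁ / r) = (v₁ * w - v * w₁) / r := by ring
  have hb : v * (w₁ / r) ≤ w * (v₁ / r) := sub_nonneg.1 (hsub ▸ (div_pos hpos hr).le)
  have hcmp := hf.sub_le_of_apply_le hb hf_le
  rw [hsub, ← mul_div_assoc, le_div_iff₀ hr] at hcmp
  nlinarith [mul_le_mul_of_nonneg_right hn hpos.le]

end IsRadialElliptic

end RadialElliptic

section RadialSupersolution

/-- A positive radial supersolution `v` of `f (v'') (v' / r) + μ * v * r ^ (-γ) = 0` in the
punctured unit ball, as admitted in the definition of the radial principal eigenvalue. -/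
def IsRadialSupersolution (f : ℝ → ℝ → ℝ) (γ μ : ℝ) (v : ℝ → ℝ) : Prop :=
  ContDiffOn ℝ 2 v (Ioo 0 1) ∧ (∀ r ∈ Ioo (0 : ℝ) 1, 0 < v r) ∧
    ∀ r ∈ Ioo (0 : ℝ) 1, f (deriv (deriv v) r) (deriv v r / r) + μ * v r * r ^ (-γ) ≤ 0

namespace IsRadialSupersolution

variable {f : ℝ → ℝ → ℝ} {lam Lam n γ μ : ℝ} {v : ℝ → ℝ}

lemma hasDerivAt (hv : IsRadialSupersolution f γ μ v) {r : ℝ} (hr : r ∈ Ioo 0 1) :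
    HasDerivAt v (deriv v r) r :=
  ((hv.1.differentiableOn two_ne_zero r hr).differentiableAt (isOpen_Ioo.mem_nhds hr)).hasDerivAt

lemma hasDerivAt_deriv (hv : IsRadialSupersolution f γ μ v) {r : ℝ} (hr : r ∈ Ioo 0 1) :
    HasDerivAt (deriv v) (deriv (deriv v) r) r :=
  (((hv.1.deriv_of_isOpen (m := 1) isOpen_Ioo (by norm_num)).differentiableOn one_ne_zero r hr
    ).differentiableAt (isOpen_Ioo.mem_nhds hr)).hasDerivAt

lemma deriv_nonneg_of_eq_zero (hf : IsRadialElliptic f lam Lam n) (hn : 1 ≤ lam / Lam * n)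
    (hv : IsRadialSupersolution f γ μ v) {w w₁ w₂ : ℝ → ℝ} {R B : ℝ} (hR : R ∈ Ioo 0 1)
    (hw : ∀ r ∈ Ioc 0 R, HasDerivAt w (w₁ r) r) (hw₁ : ∀ r ∈ Ioc 0 R, HasDerivAt w₁ (w₂ r) r)
    (hw0 : ∀ r ∈ Ioo 0 R, 0 < w r) (hwB : ∀ r ∈ Ioo 0 R, w r ≤ B) (hwR : w R = 0)
    (hfw : ∀ r ∈ Ioo 0 R, -(μ * r ^ (-γ) * w r) ≤ f (w₂ r) (w₁ r / r)) : 0 ≤ w₁ R := by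
  have hRmem : R ∈ Ioc 0 R := right_mem_Ioc.2 hR.1
  have hsub : Ioo 0 R ⊆ Ioo 0 1 := Ioo_subset_Ioo_right hR.2.le
  have hW : ∀ r ∈ Ioo 0 R, deriv v r * w r - v r * w₁ r ≤ 0 := by
    refine wronskian_nonpos (fun r hr ↦ hv.hasDerivAt (hsub hr))
      (fun r hr ↦ hv.hasDerivAt_deriv (hsub hr)) (fun r hr ↦ hw r (Ioo_subset_Ioc_self hr))
      (fun r hr ↦ hw₁ r (Ioo_subset_Ioc_self hr)) (fun r hr ↦ hv.2.1 r (hsub hr)) hw0 hwB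
      fun r hr hpos ↦ ?_
    have hfv := hv.2.2 r (hsub hr)
    exact hf.wronskian_deriv_le hn hr.1 (hv.2.1 r (hsub hr)) (hw0 r hr)
      (by linarith [mul_right_comm μ (v r) (r ^ (-γ))]) (hfw r hr) hpos
  have hcont : ContinuousAt (fun r ↦ deriv v r * w r - v r * w₁ r) R :=
    ((hv.hasDerivAt_deriv hR).continuousAt.mul (hw R hRmem).continuousAt).sub
      ((hv.hasDerivAt hR).continuousAt.mul (hw₁ R hRmem).continuousAt)
  have hclosure : R ∈ closure (Ioo 0 R) := by
    rw [closure_Ioo hR.1.ne]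
    exact right_mem_Icc.2 hR.1.le
  have hWR : deriv v R * w R - v R * w₁ R ≤ 0 :=
    hcont.continuousWithinAt.closure_le hclosure continuousWithinAt_const hW
  rw [hwR, mul_zero, zero_sub, neg_nonpos] at hWR
  exact nonneg_of_mul_nonneg_right hWR (hv.2.1 R hR)

end IsRadialSupersolution

end RadialSupersolution

section RadialProfile

/-- The radial function `r ↦ U (μ * r ^ β)`, which solves the eigenvalue equation with eigenvalue
`μ` and weight `r ^ (β - 2)` when `U` is the regular solution of the normalised equation. -/
def radialProfile (U : ℝ → ℝ) (β μ r : ℝ) : ℝ := U (μ * r ^ β)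

/-- The derivative of `radialProfile U β μ` when `U' = p`. -/
def radialProfileDeriv (p : ℝ → ℝ) (β μ r : ℝ) : ℝ := μ * β * r ^ (β - 1) * p (μ * r ^ β)

/-- The second derivative of `radialProfile U β μ` when `U' = p` and `t * p' t = g (p t) (U t)`. -/
def radialProfileDeriv₂ (g : ℝ → ℝ → ℝ) (U p : ℝ → ℝ) (β μ r : ℝ) : ℝ :=
  μ * r ^ (β - 2) *
    (β * ((β - 1) * p (μ * r ^ β) + β * g (p (μ * r ^ β)) (U (μ * r ^ β))))

lemma exists_abs_radialProfile_sub_le {U : ℝ → ℝ} (hU : ContDiff ℝ 1 U) {β μ : ℝ} (hβ : 1 ≤ β)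
    (hμ : 0 ≤ μ) : ∃ B, ∀ x ∈ Icc (0 : ℝ) 1, ∀ y ∈ Icc (0 : ℝ) 1,
      |radialProfile U β μ x - radialProfile U β μ y| ≤ B * |x - y| := by
  obtain ⟨B, hB, hle⟩ := exists_abs_comp_rpow_sub_le hU hμ (zero_le_one.trans hβ)
  refine ⟨B * β, fun x hx y hy ↦ (hle x hx y hy).trans ?_⟩
  rw [mul_assoc]
  exact mul_le_mul_of_nonneg_left (abs_rpow_sub_rpow_le_mul hβ hx hy) hB

lemma exists_abs_radialProfile_sub_le_rpow {U : ℝ → ℝ} (hU : ContDiff ℝ 1 U) {β μ : ℝ} (hβ0 : 0 ≤ β)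
    (hβ1 : β ≤ 1) (hμ : 0 ≤ μ) : ∃ B, ∀ x ∈ Icc (0 : ℝ) 1, ∀ y ∈ Icc (0 : ℝ) 1,
      |radialProfile U β μ x - radialProfile U β μ y| ≤ B * |x - y| ^ β := by
  obtain ⟨B, hB, hle⟩ := exists_abs_comp_rpow_sub_le hU hμ hβ0
  exact ⟨B, fun x hx y hy ↦ (hle x hx y hy).trans (mul_le_mul_of_nonneg_left
    (abs_rpow_sub_rpow_le_rpow_abs_sub hβ0 hβ1 hx.1 hy.1) hB)⟩

lemma contDiff_radialProfile {U : ℝ → ℝ} (hU : ContDiff ℝ 1 U) {β : ℝ} (hβ : 1 ≤ β) (μ : ℝ) :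
    ContDiff ℝ 1 (radialProfile U β μ) :=
  hU.comp (contDiff_const.mul (contDiff_rpow_const_of_le (n := 1) (by exact_mod_cast hβ)))

lemma continuous_radialProfile {U : ℝ → ℝ} (hU : Continuous U) {β : ℝ} (hβ : 0 ≤ β) (μ : ℝ) :
    Continuous (radialProfile U β μ) :=
  hU.comp (continuous_const.mul (continuous_rpow_const hβ))

variable {f g : ℝ → ℝ → ℝ} {lam Lam n m K L c β μ r : ℝ} {U p : ℝ → ℝ}

lemma mul_rpow_mem_Ico (hμ : 0 < μ) (hβ : 0 < β) (hr : r ∈ Ico 0 1) :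
    μ * r ^ β ∈ Ico 0 μ :=
  ⟨mul_nonneg hμ.le (rpow_nonneg hr.1 β),
    mul_lt_of_lt_one_right hμ (rpow_lt_one hr.1 hr.2 hβ)⟩

lemma hasDerivAt_mul_rpow (hr : 0 < r) :
    HasDerivAt (fun s ↦ μ * s ^ β) (μ * (β * r ^ (β - 1))) r :=
  (hasDerivAt_rpow_const (Or.inl hr.ne')).const_mul μ

lemma IsRegularSolution.hasDerivAt_radialProfile (hU : IsRegularSolution g K U p) (hr : 0 < r) :
    HasDerivAt (radialProfile U β μ) (radialProfileDeriv p β μ r) r :=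
  ((hU.hasDerivAt (μ * r ^ β)).comp r (hasDerivAt_mul_rpow hr)).congr_deriv (by
    rw [radialProfileDeriv]
    ring)

lemma IsRegularSolution.hasDerivAt_radialProfileDeriv (hU : IsRegularSolution g K U p)
    (hg : Continuous (Function.uncurry g)) (hK : 1 ≤ K) (hμ : 0 < μ) (hr : 0 < r) :
    HasDerivAt (radialProfileDeriv p β μ) (radialProfileDeriv₂ g U p β μ r) r := by
  have hpow : HasDerivAt (fun s ↦ μ * β * s ^ (β - 1)) (μ * β * ((β - 1) * r ^ (β - 1 - 1))) r :=
    (hasDerivAt_rpow_const (Or.inl hr.ne')).const_mul _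
  have hp := (hU.hasDerivAt_deriv hg hK (mul_pos hμ (rpow_pos_of_pos hr β))).comp r
    (hasDerivAt_mul_rpow hr)
  refine (hpow.mul hp).congr_deriv ?_
  have hrβ : r ^ β ≠ 0 := (rpow_pos_of_pos hr β).ne'
  have hβ2 : β - 2 = β - 1 - 1 := by ring
  rw [radialProfileDeriv₂, hβ2, rpow_sub_one hr.ne', rpow_sub_one hr.ne']
  simp only [Function.comp_apply]
  field_simp

lemma IsRegularSolution.continuousOn_radialProfileDeriv₂ (hU : IsRegularSolution g K U p)
    (hg : Continuous (Function.uncurry g)) (hβ : 0 ≤ β) :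
    ContinuousOn (radialProfileDeriv₂ g U p β μ) (Ioo 0 1) := by
  have ht : Continuous fun r : ℝ ↦ μ * r ^ β := continuous_const.mul (continuous_rpow_const hβ)
  have hp := hU.continuous_deriv.comp ht
  have hpow : ContinuousOn (fun r : ℝ ↦ r ^ (β - 2)) (Ioo 0 1) := fun r hr ↦
    (continuousAt_rpow_const r _ (Or.inl hr.1.ne')).continuousWithinAt
  exact (continuousOn_const.mul hpow).mul (continuous_const.mul ((continuous_const.mul hp).add
    (continuous_const.mul (hg.comp (hp.prodMk (hU.continuous.comp ht)))))).continuousOn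

lemma IsRegularSolution.contDiffOn_radialProfile (hU : IsRegularSolution g K U p)
    (hg : Continuous (Function.uncurry g)) (hK : 1 ≤ K) (hβ : 0 ≤ β) (hμ : 0 < μ) :
    ContDiffOn ℝ 2 (radialProfile U β μ) (Ioo 0 1) :=
  contDiffOn_two_of_hasDerivAt isOpen_Ioo (fun _ hr ↦ hU.hasDerivAt_radialProfile hr.1)
    (fun _ hr ↦ hU.hasDerivAt_radialProfileDeriv hg hK hμ hr.1)
    (hU.continuousOn_radialProfileDeriv₂ hg hβ)

lemma IsRegularSolution.deriv_deriv_radialProfile (hU : IsRegularSolution g K U p)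
    (hg : Continuous (Function.uncurry g)) (hK : 1 ≤ K) (hμ : 0 < μ) (hr : 0 < r) :
    deriv (deriv (radialProfile U β μ)) r = radialProfileDeriv₂ g U p β μ r := by
  have heq : deriv (radialProfile U β μ) =ᶠ[nhds r] radialProfileDeriv p β μ := by
    filter_upwards [lt_mem_nhds hr] with s hs
    exact (hU.hasDerivAt_radialProfile hs).deriv
  rw [heq.deriv_eq, (hU.hasDerivAt_radialProfileDeriv hg hK hμ hr).deriv]

lemma IsRadialElliptic.apply_radialProfileDeriv (hf : IsRadialElliptic f lam Lam n)
    (hfg : ∀ p u, f (β * ((β - 1) * p + β * g p u)) (β * p) = -u) (hμ : 0 < μ) (hr : 0 < r) :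
    f (radialProfileDeriv₂ g U p β μ r) (radialProfileDeriv p β μ r / r)
      = -(μ * r ^ (-(2 - β)) * radialProfile U β μ r) := by
  have hdiv : radialProfileDeriv p β μ r / r = μ * r ^ (β - 2) * (β * p (μ * r ^ β)) := by
    have hβ2 : β - 2 = β - 1 - 1 := by ring
    rw [radialProfileDeriv, hβ2, rpow_sub_one hr.ne' (β - 1)]
    ring
  rw [hdiv, radialProfileDeriv₂, hf.homog _ _ (mul_pos hμ (rpow_pos_of_pos hr _)), hfg, neg_sub,
    radialProfile, mul_neg]

lemma IsRegularSolution.le_of_isRadialSupersolution (hU : IsRegularSolution g K U p)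
    (hf : IsRadialElliptic f lam Lam n) (hn : 1 ≤ lam / Lam * n) (hβ : 0 < β)
    (hg : IsDamped g m K L c) (hfg : ∀ p u, f (β * ((β - 1) * p + β * g p u)) (β * p) = -u)
    {T : ℝ} (hT : 0 < T) (hUT : U T = 0) (hpos : ∀ t ∈ Ico 0 T, 0 < U t) {v : ℝ → ℝ}
    (hv : IsRadialSupersolution f (2 - β) μ v) : μ ≤ T := by
  by_contra! hTμ
  have hμ : 0 < μ := hT.trans hTμ
  obtain ⟨R, hR⟩ : ∃ R, R = (T / μ) ^ β⁻¹ := ⟨_, rfl⟩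
  have hR0 : 0 < R := hR ▸ rpow_pos_of_pos (div_pos hT hμ) _
  have hR1 : R < 1 :=
    hR ▸ rpow_lt_one (div_pos hT hμ).le ((div_lt_one hμ).2 hTμ) (inv_pos.2 hβ)
  have hRβ : μ * R ^ β = T := by
    rw [hR, rpow_inv_rpow (div_pos hT hμ).le hβ.ne', mul_div_cancel₀ _ hμ.ne']
  have hmem {r : ℝ} (hr : r ∈ Ioo 0 R) : μ * r ^ β ∈ Ico 0 T :=
    ⟨mul_nonneg hμ.le (rpow_nonneg hr.1.le β),
      hRβ ▸ mul_lt_mul_of_pos_left (rpow_lt_rpow hr.1.le hr.2 hβ) hμ⟩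
  obtain ⟨B, hB⟩ := isCompact_Icc.bddAbove_image (K := Icc 0 T) hU.continuous.continuousOn
  have hnonneg : 0 ≤ radialProfileDeriv p β μ R :=
    hv.deriv_nonneg_of_eq_zero hf hn ⟨hR0, hR1⟩
      (fun r hr ↦ hU.hasDerivAt_radialProfile hr.1)
      (fun r hr ↦ hU.hasDerivAt_radialProfileDeriv hg.continuous_uncurry hg.one_le hμ hr.1)
      (fun r hr ↦ hpos _ (hmem hr))
      (fun r hr ↦ hB (mem_image_of_mem U (Ico_subset_Icc_self (hmem hr))))
      (by rw [radialProfile, hRβ, hUT])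
      (fun r hr ↦ (hf.apply_radialProfileDeriv hfg hμ hr.1).ge)
  have hneg : radialProfileDeriv p β μ R < 0 := by
    rw [radialProfileDeriv, hRβ]
    exact mul_neg_of_pos_of_neg (by positivity) (hU.deriv_neg hg hT hpos T (right_mem_Icc.2 hT.le))
  exact hneg.not_ge hnonneg

theorem IsRadialElliptic.exists_isGreatest_radialProfile (hf : IsRadialElliptic f lam Lam n)
    (hn : 1 ≤ lam / Lam * n) (hβ : 0 < β) :
    ∃ T U, 0 < T ∧ ContDiff ℝ 1 U ∧ U T = 0 ∧ (∀ t ∈ Ico 0 T, 0 < U t) ∧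
      ContDiffOn ℝ 2 (radialProfile U β T) (Ioo 0 1) ∧
      (∀ r ∈ Ioo (0 : ℝ) 1, f (deriv (deriv (radialProfile U β T)) r)
        (deriv (radialProfile U β T) r / r) + T * radialProfile U β T r * r ^ (-(2 - β)) = 0) ∧
      IsGreatest {μ | ∃ v, IsRadialSupersolution f (2 - β) μ v} T := by
  obtain ⟨g, hg, hfg⟩ := hf.exists_isDamped hn hβ
  obtain ⟨U, p, hU⟩ := hg.exists_isRegularSolution
  obtain ⟨T, hT, hUT, hpos⟩ := hU.exists_first_zero hg
  have hC2 := hU.contDiffOn_radialProfile hg.continuous_uncurry hg.one_le hβ.le hT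
  have heq : ∀ r ∈ Ioo (0 : ℝ) 1, f (deriv (deriv (radialProfile U β T)) r)
      (deriv (radialProfile U β T) r / r) + T * radialProfile U β T r * r ^ (-(2 - β)) = 0 := by
    intro r hr
    rw [hU.deriv_deriv_radialProfile hg.continuous_uncurry hg.one_le hT hr.1,
      (hU.hasDerivAt_radialProfile hr.1).deriv, hf.apply_radialProfileDeriv hfg hT hr.1]
    ring
  refine ⟨T, U, hT, hU.contDiff, hUT, hpos, hC2, heq, ⟨radialProfile U β T, hC2, ?_, ?_⟩, ?_⟩
  · exact fun r hr ↦ hpos _ (mul_rpow_mem_Ico hT hβ ⟨hr.1.le, hr.2⟩)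
  · exact fun r hr ↦ (heq r hr).le
  · rintro μ ⟨v, hv⟩
    exact hU.le_of_isRadialSupersolution hf hn hβ hg hfg hT hUT hpos hv

end RadialProfile

section DiagonalMatrix

lemma posSemidef_Dmat (N : ℕ) {a b : ℝ} (ha : 0 ≤ a) (hb : 0 ≤ b) : (Dmat N a b).PosSemidef :=
  Matrix.PosSemidef.diagonal fun i ↦ by
    simp only [Pi.zero_apply]
    split_ifs <;> assumption

lemma trace_Dmat {N : ℕ} (hN : N ≠ 0) (a b : ℝ) : (Dmat N a b).trace = a + ((N : ℝ) - 1) * b := by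
  obtain ⟨m, rfl⟩ := Nat.exists_eq_succ_of_ne_zero hN
  rw [Dmat, Matrix.trace_diagonal, Fin.sum_univ_succ]
  simp

lemma Dmat_add_Dmat (N : ℕ) (a b a' b' : ℝ) :
    Dmat N a b + Dmat N a' b' = Dmat N (a + a') (b + b') := by
  rw [Dmat, Dmat, Dmat, Matrix.diagonal_add]
  congr 1
  ext i
  split_ifs <;> rfl

lemma smul_Dmat (N : ℕ) (t a b : ℝ) : t • Dmat N a b = Dmat N (t * a) (t * b) := by
  rw [Dmat, Dmat, ← Matrix.diagonal_smul]
  congr 1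
  ext i
  simp

lemma isRadialElliptic_Dmat {N : ℕ} (hN : 1 < N) {lam Lam : ℝ} (hlam : 0 < lam)
    {F : Matrix (Fin N) (Fin N) ℝ → ℝ} (hF1 : UnifElliptic N lam Lam F) (hF3 : PosHomog N F) :
    IsRadialElliptic (fun a b ↦ F (Dmat N a b)) lam Lam ((N : ℝ) - 1) := by
  have hell {a b a' b' : ℝ} (ha : a ≤ a') (hb : b ≤ b') :
      lam * ((a' - a) + ((N : ℝ) - 1) * (b' - b)) ≤ F (Dmat N a' b') - F (Dmat N a b) ∧
      F (Dmat N a' b') - F (Dmat N a b) ≤ Lam * ((a' - a) + ((N : ℝ) - 1) * (b' - b)) := by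
    have h := hF1 (Dmat N a b) (Dmat N (a' - a) (b' - b)) (Matrix.isSymm_diagonal _)
      (posSemidef_Dmat N (sub_nonneg.2 ha) (sub_nonneg.2 hb))
    rwa [Dmat_add_Dmat, add_sub_cancel, add_sub_cancel, trace_Dmat (by lia)] at h
  refine ⟨hlam, sub_pos.2 (by exact_mod_cast hN), fun ha hb ↦ (hell ha hb).1,
    fun ha hb ↦ (hell ha hb).2, fun a b ht ↦ ?_⟩
  rw [← smul_Dmat, hF3 _ ht]

end DiagonalMatrix

theorem stmt0_general (N : ℕ) (hN : 2 ≤ N) (lam Lam : ℝ) (hlam : 0 < lam)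
    (hNp : 2 ≤ lam / Lam * ((N : ℝ) - 1) + 1)
    (F : Matrix (Fin N) (Fin N) ℝ → ℝ) (hF1 : UnifElliptic N lam Lam F) (hF3 : PosHomog N F)
    (γ : ℝ) (hγ2 : γ < 2) :
    0 < radialEV N F γ ∧
    ∃ u : ℝ → ℝ, ContinuousOn u (Icc 0 1) ∧ ContDiffOn ℝ 2 u (Ioo 0 1) ∧
      (∀ r ∈ Ico (0:ℝ) 1, 0 < u r) ∧ u 1 = 0 ∧
      (∀ r ∈ Ioo (0:ℝ) 1,
        F (Dmat N (deriv (deriv u) r) (deriv u r / r))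
          + radialEV N F γ * u r * r ^ (-γ) = 0) ∧
      (γ ≤ 1 → ∃ K : ℝ, ∀ x ∈ Icc (0:ℝ) 1, ∀ y ∈ Icc (0:ℝ) 1,
        |u x - u y| ≤ K * |x - y|) ∧
      (γ < 1 → ContDiffOn ℝ 1 u (Ico 0 1)) ∧
      (1 < γ → ∃ C : ℝ, ∀ x ∈ Icc (0:ℝ) 1, ∀ y ∈ Icc (0:ℝ) 1,
        |u x - u y| ≤ C * |x - y| ^ (2 - γ)) := by
  obtain ⟨β, rfl⟩ : ∃ β, γ = 2 - β := ⟨2 - γ, by ring⟩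
  have hβ : 0 < β := by linarith
  have hf := isRadialElliptic_Dmat hN hlam hF1 hF3
  obtain ⟨T, U, hT, hU, hUT, hpos, hC2, heq, hmax⟩ :=
    hf.exists_isGreatest_radialProfile (by linarith) hβ
  have hev : radialEV N F (2 - β) = T := hmax.csSup_eq
  rw [hev, sub_sub_cancel]
  exact ⟨hT, radialProfile U β T, (continuous_radialProfile hU.continuous hβ.le T).continuousOn,
    hC2, fun r hr ↦ hpos _ (mul_rpow_mem_Ico hT hβ hr),
    by rw [radialProfile, one_rpow, mul_one, hUT], heq,
    fun hγ ↦ exists_abs_radialProfile_sub_le hU (by linarith) hT.le,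
    fun hγ ↦ (contDiff_radialProfile hU (by linarith) T).contDiffOn,
    fun hγ ↦ exists_abs_radialProfile_sub_le_rpow hU hβ.le (by linarith) hT.le⟩

theorem stmt0 (N : ℕ) (hN : 2 ≤ N) (lam Lam : ℝ) (hlam : 0 < lam) (hlL : lam ≤ Lam)
    (hNp : 2 < lam / Lam * ((N : ℝ) - 1) + 1)
    (F : Matrix (Fin N) (Fin N) ℝ → ℝ)
    (hF1 : UnifElliptic N lam Lam F) (hF2 : RotInvariant N F) (hF3 : PosHomog N F)
    (γ : ℝ) (hγ0 : 0 < γ) (hγ2 : γ < 2) :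
    0 < radialEV N F γ ∧
    ∃ u : ℝ → ℝ, ContinuousOn u (Icc 0 1) ∧ ContDiffOn ℝ 2 u (Ioo 0 1) ∧
      (∀ r ∈ Ico (0:ℝ) 1, 0 < u r) ∧ u 1 = 0 ∧
      (∀ r ∈ Ioo (0:ℝ) 1,
        F (Dmat N (deriv (deriv u) r) (deriv u r / r))
          + radialEV N F γ * u r * r ^ (-γ) = 0) ∧
      (γ ≤ 1 → ∃ K : ℝ, ∀ x ∈ Icc (0:ℝ) 1, ∀ y ∈ Icc (0:ℝ) 1,
        |u x - u y| ≤ K * |x - y|) ∧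
      (γ < 1 → ContDiffOn ℝ 1 u (Ico 0 1)) ∧
      (1 < γ → ∃ C : ℝ, ∀ x ∈ Icc (0:ℝ) 1, ∀ y ∈ Icc (0:ℝ) 1,
        |u x - u y| ≤ C * |x - y| ^ (2 - γ)) :=
  stmt0_general N hN lam Lam hlam hNp.le F hF1 hF3 γ hγ2

end
end

section
/- The radial principal eigenvalues of the Pucci extremal operators are stable as γ tends to 2 from below: lim_{γ→2⁻} λ̄'_γ(𝓜⁺) = Λ·((Ñ₊−2)/2)² and lim_{γ→2⁻} λ̄'_γ(𝓜⁻) = λ·((Ñ₋−2)/2)². -/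
open Set Real Filter MeasureTheory

noncomputable section

/-- The radial expression of the Pucci maximal operator `𝓜⁺` applied to a radial
function `u = u(r)`. -/
def pucciP (lam Lam : ℝ) (N : ℕ) (u : ℝ → ℝ) (r : ℝ) : ℝ :=
  Lam * max (deriv (deriv u) r) 0 - lam * max (-(deriv (deriv u) r)) 0 +
  ((N : ℝ) - 1) * (Lam * max (deriv u r / r) 0 - lam * max (-(deriv u r / r)) 0)

/-- The radial expression of the Pucci minimal operator `𝓜⁻` applied to a radial
function `u = u(r)`. -/
def pucciM (lam Lam : ℝ) (N : ℕ) (u : ℝ → ℝ) (r : ℝ) : ℝ :=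
  lam * max (deriv (deriv u) r) 0 - Lam * max (-(deriv (deriv u) r)) 0 +
  ((N : ℝ) - 1) * (lam * max (deriv u r / r) 0 - Lam * max (-(deriv u r / r)) 0)

/-- The radial principal eigenvalue `λ̄'_γ` on the punctured unit ball for a radial
operator `Op`. -/
def radialEVop (Op : (ℝ → ℝ) → ℝ → ℝ) (γ : ℝ) : ℝ :=
  sSup {μ : ℝ | ∃ u : ℝ → ℝ, ContDiffOn ℝ 2 u (Ioo 0 1) ∧
    (∀ r ∈ Ioo (0:ℝ) 1, 0 < u r) ∧
    (∀ r ∈ Ioo (0:ℝ) 1, Op u r + μ * u r * r ^ (-γ) ≤ 0)}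

/-!
With `p = -r u' / u`, a positive supersolution turns into a Riccati inequality for
`r p' = p + p² - r² u'' / u`. If the operator dominates `a u'' + b u' / r` pointwise and `μ` exceeds
the Hardy constant `(b - a)² / (4a)`, the quadratic polynomial in `p` bounding `r p'` from below has
negative discriminant, so `r p' ≥ c (1 + p²)`. Then `arctan p - c log r` increases, whereas `arctan`
only has room `π`: the inequality cannot persist on an interval that is too long in the variable
`log r`. This interval depends on `c` alone and stays away from `r = 0`, where `r ^ (-γ)` converges
uniformly to `r ^ (-2)`, so the upper bound survives as `γ → 2`. The power `r ^ (-τ)` with the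
critical exponent `τ` is a supersolution attaining the bound.
-/

/-- A positive `C²` supersolution on `(0, 1)` of the eigenvalue problem with potential
`μ r ^ (-γ)`; these are the functions admitted in `radialEVop`. -/
def IsPosSupersolution (Op : (ℝ → ℝ) → ℝ → ℝ) (γ μ : ℝ) (u : ℝ → ℝ) : Prop :=
  ContDiffOn ℝ 2 u (Ioo 0 1) ∧ (∀ r ∈ Ioo (0 : ℝ) 1, 0 < u r) ∧
    ∀ r ∈ Ioo (0 : ℝ) 1, Op u r + μ * u r * r ^ (-γ) ≤ 0

/-- The Riccati variable `p = -r u' / u` of a positive radial function. -/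
def riccatiVar (u : ℝ → ℝ) (r : ℝ) : ℝ := -(r * deriv u r / u r)

/-- The derivative of `riccatiVar u` with respect to `log r`, written out in terms of `u''`. -/
def riccatiSlope (u : ℝ → ℝ) (r : ℝ) : ℝ :=
  riccatiVar u r + riccatiVar u r ^ 2 - r ^ 2 * deriv (deriv u) r / u r

/-- At every point, `Op` dominates a linear radial operator `a u'' + b u' / r` with `a ∈ [lam, Lam]`
whose Hardy constant `(b - a)² / (4a)` is at most `T`. -/
def HasHardyBound (Op : (ℝ → ℝ) → ℝ → ℝ) (lam Lam T : ℝ) : Prop :=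
  ∀ u r, ∃ a ∈ Icc lam Lam, ∃ b, (b - a) ^ 2 ≤ 4 * a * T ∧
    a * deriv (deriv u) r + b * (deriv u r / r) ≤ Op u r

section Riccati

variable {u : ℝ → ℝ} {a b c r : ℝ}

lemma hasDerivAt_riccatiVar (hr : r ≠ 0) (hur : u r ≠ 0) (hu : DifferentiableAt ℝ u r)
    (hu' : DifferentiableAt ℝ (deriv u) r) :
    HasDerivAt (riccatiVar u) (riccatiSlope u r / r) r := by
  have h := (((hasDerivAt_id r).mul hu'.hasDerivAt).div hu.hasDerivAt hur).neg
  refine h.congr_deriv ?_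
  simp only [Pi.mul_apply, id, riccatiSlope, riccatiVar]
  field_simp
  ring

lemma mul_log_div_lt_pi_of_mul_one_add_sq_le {p s : ℝ → ℝ} (ha : 0 < a) (hab : a ≤ b)
    (hp : ∀ r ∈ Icc a b, HasDerivAt p (s r / r) r)
    (hle : ∀ r ∈ Icc a b, c * (1 + p r ^ 2) ≤ s r) : c * log (b / a) < π := by
  have hder : ∀ r ∈ Icc a b, HasDerivAt (fun r => arctan (p r) - c * log r)
      (1 / (1 + p r ^ 2) * (s r / r) - c * r⁻¹) r := fun r hr =>
    (hp r hr).arctan.sub ((hasDerivAt_log (ha.trans_le hr.1).ne').const_mul c)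
  have hmono : MonotoneOn (fun r => arctan (p r) - c * log r) (Icc a b) := by
    refine monotoneOn_of_hasDerivWithinAt_nonneg (convex_Icc a b)
      (fun r hr => (hder r hr).continuousAt.continuousWithinAt)
      (fun r hr => (hder r (interior_subset hr)).hasDerivWithinAt) fun r hr => ?_
    have hr' := interior_subset hr
    have hr0 : 0 < r := ha.trans_le hr'.1
    have hslope : c ≤ s r / (1 + p r ^ 2) :=
      (le_div_iff₀ (by positivity)).mpr (hle r hr')
    calc (0 : ℝ) ≤ (s r / (1 + p r ^ 2) - c) * r⁻¹ :=
          mul_nonneg (sub_nonneg.mpr hslope) (inv_nonneg.mpr hr0.le)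
      _ = 1 / (1 + p r ^ 2) * (s r / r) - c * r⁻¹ := by ring
  have hends := hmono (left_mem_Icc.mpr hab) (right_mem_Icc.mpr hab) hab
  have hb := arctan_lt_pi_div_two (p b)
  have ha' := neg_pi_div_two_lt_arctan (p a)
  rw [log_div (ha.trans_le hab).ne' ha.ne']
  linarith

lemma mul_log_div_lt_pi_of_le_riccatiSlope {S : Set ℝ} (hS : IsOpen S) (hu : ContDiffOn ℝ 2 u S)
    (ha : 0 < a) (hab : a ≤ b) (hsub : Icc a b ⊆ S) (hne : ∀ r ∈ Icc a b, u r ≠ 0)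
    (hle : ∀ r ∈ Icc a b, c * (1 + riccatiVar u r ^ 2) ≤ riccatiSlope u r) :
    c * log (b / a) < π := by
  have hu' : ContDiffOn ℝ 1 (deriv u) S := hu.deriv_of_isOpen hS (by norm_num)
  refine mul_log_div_lt_pi_of_mul_one_add_sq_le ha hab (fun r hr => ?_) hle
  have hnhds : S ∈ nhds r := hS.mem_nhds (hsub hr)
  exact hasDerivAt_riccatiVar (ha.trans_le hr.1).ne' (hne r hr)
    ((hu.differentiableOn (by norm_num)).differentiableAt hnhds)
    ((hu'.differentiableOn (by norm_num)).differentiableAt hnhds)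

lemma le_mul_riccatiSlope {m : ℝ} (hr : 0 < r) (hur : 0 < u r)
    (h : a * deriv (deriv u) r + b * (deriv u r / r) + m * (u r / r ^ 2) ≤ 0) :
    a * riccatiVar u r ^ 2 - (b - a) * riccatiVar u r + m ≤ a * riccatiSlope u r := by
  have hscaled := mul_nonpos_of_nonneg_of_nonpos (div_pos (pow_pos hr 2) hur).le h
  have hcancel : r ^ 2 / u r *
      (a * deriv (deriv u) r + b * (deriv u r / r) + m * (u r / r ^ 2)) =
      a * (r ^ 2 * deriv (deriv u) r / u r) - b * riccatiVar u r + m := by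
    rw [riccatiVar]
    field_simp
    ring
  rw [hcancel] at hscaled
  rw [riccatiSlope]
  linarith

end Riccati

lemma exists_mul_one_add_sq_le_sub_sq_add {e K : ℝ} (he : 0 < e) (hK : 0 ≤ K) :
    ∃ c > 0, ∀ A p : ℝ, A ^ 2 ≤ K → c * (1 + p ^ 2) ≤ (p - A) ^ 2 + e := by
  refine ⟨e / (2 * e + 2 * K + 1), by positivity, fun A p hA => ?_⟩
  rw [div_mul_eq_mul_div, div_le_iff₀ (by positivity)]
  have hp : p ^ 2 ≤ 2 * (p - A) ^ 2 + 2 * K := by nlinarith [sq_nonneg (p - 2 * A)]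
  calc e * (1 + p ^ 2) ≤ e * (1 + (2 * (p - A) ^ 2 + 2 * K)) := by gcongr
    _ ≤ ((p - A) ^ 2 + e) * (2 * e + 2 * K + 1) := by
      nlinarith [mul_nonneg (sq_nonneg (p - A)) hK, sq_nonneg (p - A), sq_nonneg e]

namespace IsPosSupersolution

variable {Op : (ℝ → ℝ) → ℝ → ℝ} {γ μ : ℝ} {u : ℝ → ℝ}

lemma of_le {γ' : ℝ} (hu : IsPosSupersolution Op γ' μ u) (hμ : 0 ≤ μ) (hγ : γ ≤ γ') :
    IsPosSupersolution Op γ μ u := by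
  refine ⟨hu.1, hu.2.1, fun r hr => le_trans ?_ (hu.2.2 r hr)⟩
  have hpow : r ^ (-γ) ≤ r ^ (-γ') := rpow_le_rpow_of_exponent_ge hr.1 hr.2.le (neg_le_neg hγ)
  have hμu : 0 ≤ μ * u r := mul_nonneg hμ (hu.2.1 r hr).le
  gcongr

lemma add_mul_div_sq_nonpos {a m r : ℝ} (hu : IsPosSupersolution Op γ μ u) (hμ : 0 ≤ μ)
    (hγ : γ ≤ 2) (ha : 0 < a) (hm : m ≤ μ * a ^ (2 - γ)) (hr : r ∈ Ico a 1) :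
    Op u r + m * (u r / r ^ 2) ≤ 0 := by
  have hr0 : 0 < r := ha.trans_le hr.1
  have hur : 0 < u r := hu.2.1 r ⟨hr0, hr.2⟩
  have hpow : a ^ (2 - γ) ≤ r ^ (2 - γ) := rpow_le_rpow ha.le hr.1 (sub_nonneg.mpr hγ)
  have hmr : m ≤ μ * r ^ (2 - γ) := hm.trans (mul_le_mul_of_nonneg_left hpow hμ)
  calc Op u r + m * (u r / r ^ 2) ≤ Op u r + μ * r ^ (2 - γ) * (u r / r ^ 2) := by gcongr
    _ = Op u r + μ * u r * r ^ (-γ) := by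
      rw [sub_eq_add_neg, rpow_add hr0, rpow_two]
      field_simp
    _ ≤ 0 := hu.2.2 r ⟨hr0, hr.2⟩

end IsPosSupersolution

namespace HasHardyBound

variable {Op : (ℝ → ℝ) → ℝ → ℝ} {lam Lam T m : ℝ}

lemma nonneg (hOp : HasHardyBound Op lam Lam T) (hlam : 0 < lam) : 0 ≤ T := by
  obtain ⟨a, ha, b, hT, -⟩ := hOp 0 0
  have ha0 : 0 < 4 * a := by linarith [ha.1]
  exact nonneg_of_mul_nonneg_right ((sq_nonneg _).trans hT) ha0

lemma exists_le_riccatiSlope (hOp : HasHardyBound Op lam Lam T) (hlam : 0 < lam) (hm : T < m) :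
    ∃ c > 0, ∀ (u : ℝ → ℝ) (r : ℝ), 0 < r → 0 < u r → Op u r + m * (u r / r ^ 2) ≤ 0 →
      c * (1 + riccatiVar u r ^ 2) ≤ riccatiSlope u r := by
  have hT : 0 ≤ T := hOp.nonneg hlam
  have hLam : 0 < Lam := by
    obtain ⟨a, ha, -⟩ := hOp 0 0
    exact hlam.trans_le (ha.1.trans ha.2)
  obtain ⟨c, hc, hquad⟩ := exists_mul_one_add_sq_le_sub_sq_add (e := (m - T) / Lam) (K := T / lam)
    (div_pos (sub_pos.mpr hm) hLam) (div_nonneg hT hlam.le)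
  refine ⟨c, hc, fun u r hr hur hsuper => ?_⟩
  obtain ⟨a, ⟨hla, haL⟩, b, hab, hle⟩ := hOp u r
  have ha : 0 < a := hlam.trans_le hla
  set p := riccatiVar u r
  have hA : ((b - a) / (2 * a)) ^ 2 ≤ T / a := by
    rw [div_pow, div_le_div_iff₀ (by positivity) ha]
    nlinarith
  have hslope : a * p ^ 2 - (b - a) * p + m ≤ a * riccatiSlope u r :=
    le_mul_riccatiSlope hr hur (le_trans (by gcongr) hsuper)
  calc c * (1 + p ^ 2) ≤ (p - (b - a) / (2 * a)) ^ 2 + (m - T) / Lam :=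
        hquad _ p (hA.trans (by gcongr))
    _ ≤ (p - (b - a) / (2 * a)) ^ 2 + (m - T) / a := by
        have := sub_pos.mpr hm
        gcongr
    _ ≤ (p - (b - a) / (2 * a)) ^ 2 + (m / a - ((b - a) / (2 * a)) ^ 2) := by
        rw [sub_div m]
        gcongr
    _ = (a * p ^ 2 - (b - a) * p + m) / a := by
        field_simp
        ring
    _ ≤ riccatiSlope u r := (div_le_iff₀' ha).mpr hslope

lemma eventually_le (hOp : HasHardyBound Op lam Lam T) (hlam : 0 < lam) (hm : T < m) :
    ∀ᶠ γ in nhdsWithin 2 (Iic 2), ∀ μ u, IsPosSupersolution Op γ μ u → μ ≤ m := by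
  obtain ⟨m', hTm', hm'm⟩ := exists_between hm
  obtain ⟨c, hc, hslope⟩ := hOp.exists_le_riccatiSlope hlam hTm'
  have hm0 : 0 < m := (hOp.nonneg hlam).trans_lt hm
  set a := exp (-1 - π / c) with ha
  have ha0 : 0 < a := exp_pos _
  have hπc : 0 < π / c := div_pos pi_pos hc
  have hab : a ≤ exp (-1) := exp_le_exp.mpr (by linarith)
  have hlog : c * log (exp (-1) / a) = π := by
    rw [ha, ← exp_sub, log_exp]
    field_simp
    ring
  have hlim : Tendsto (fun γ : ℝ => m * a ^ (2 - γ)) (nhdsWithin 2 (Iic 2)) (nhds m) := by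
    have hcont : Continuous fun γ : ℝ => m * a ^ (2 - γ) :=
      continuous_const.mul (continuous_const.rpow (by fun_prop) fun _ => Or.inl ha0.ne')
    simpa using (hcont.tendsto 2).mono_left nhdsWithin_le_nhds
  filter_upwards [hlim.eventually (lt_mem_nhds hm'm), self_mem_nhdsWithin]
    with γ hγm (hγ : γ ≤ 2) μ u hu
  by_contra! hmμ
  have hm'μ : m' ≤ μ * a ^ (2 - γ) :=
    hγm.le.trans (mul_le_mul_of_nonneg_right hmμ.le (rpow_nonneg ha0.le _))
  have hsub : Icc a (exp (-1)) ⊆ Ioo 0 1 := fun r hr =>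
    ⟨ha0.trans_le hr.1, hr.2.trans_lt (by simp)⟩
  refine (mul_log_div_lt_pi_of_le_riccatiSlope isOpen_Ioo hu.1 ha0 hab hsub
    (fun r hr => (hu.2.1 r (hsub hr)).ne') fun r hr => ?_).ne hlog
  exact hslope u r (hsub hr).1 (hu.2.1 r (hsub hr))
    (hu.add_mul_div_sq_nonpos (hm0.trans hmμ).le hγ ha0 hm'μ ⟨hr.1, (hsub hr).2⟩)

lemma tendsto_radialEVop (hOp : HasHardyBound Op lam Lam T) (hlam : 0 < lam) {u : ℝ → ℝ}
    (hu : IsPosSupersolution Op 2 T u) :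
    Tendsto (radialEVop Op) (nhdsWithin 2 (Iic 2)) (nhds T) := by
  have hbounds : ∀ m > T, ∀ᶠ γ in nhdsWithin 2 (Iic 2),
      T ≤ radialEVop Op γ ∧ radialEVop Op γ ≤ m := by
    intro m hm
    filter_upwards [hOp.eventually_le hlam hm, self_mem_nhdsWithin] with γ hle hγ
    have hmem : ∃ u, IsPosSupersolution Op γ T u := ⟨u, hu.of_le (hOp.nonneg hlam) hγ⟩
    have hub : ∀ μ, (∃ u, IsPosSupersolution Op γ μ u) → μ ≤ m := fun μ ⟨u, hu⟩ => hle μ u hu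
    exact ⟨le_csSup ⟨m, hub⟩ hmem, csSup_le ⟨T, hmem⟩ hub⟩
  refine tendsto_order.mpr ⟨fun x hx => ?_, fun x hx => ?_⟩
  · exact (hbounds (T + 1) (lt_add_one T)).mono fun γ h => hx.trans_le h.1
  · obtain ⟨m, hTm, hmx⟩ := exists_between hx
    exact (hbounds m hTm).mono fun γ h => h.2.trans_lt hmx

end HasHardyBound

section Pucci

variable {lam Lam : ℝ} {N : ℕ}

lemma mul_le_mul_max_sub_mul_max {a : ℝ} (ha : a ∈ Icc lam Lam) (t : ℝ) :
    a * t ≤ Lam * max t 0 - lam * max (-t) 0 := by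
  calc a * t = a * max t 0 - a * max (-t) 0 := by
        rw [← mul_sub, max_zero_sub_eq_self]
    _ ≤ Lam * max t 0 - lam * max (-t) 0 := by
        gcongr
        exacts [ha.2, ha.1]

lemma exists_mem_Icc_mul_eq_mul_max_sub_mul_max (h : lam ≤ Lam) (t : ℝ) :
    ∃ a ∈ Icc lam Lam, a * t = lam * max t 0 - Lam * max (-t) 0 := by
  rcases le_total 0 t with ht | ht
  · exact ⟨lam, left_mem_Icc.mpr h, by simp [ht]⟩
  · exact ⟨Lam, right_mem_Icc.mpr h, by simp [ht]⟩

lemma le_pucciP {a b : ℝ} (hN : 1 ≤ N) (ha : a ∈ Icc lam Lam) (hb : b ∈ Icc lam Lam)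
    (u : ℝ → ℝ) (r : ℝ) :
    a * deriv (deriv u) r + ((N : ℝ) - 1) * b * (deriv u r / r) ≤ pucciP lam Lam N u r := by
  have hn : (0 : ℝ) ≤ N - 1 := sub_nonneg.mpr (by exact_mod_cast hN)
  rw [pucciP, mul_assoc]
  gcongr
  exacts [mul_le_mul_max_sub_mul_max ha _, mul_le_mul_max_sub_mul_max hb _]

lemma exists_eq_pucciM (h : lam ≤ Lam) (u : ℝ → ℝ) (r : ℝ) :
    ∃ a ∈ Icc lam Lam, ∃ b ∈ Icc lam Lam,
      a * deriv (deriv u) r + ((N : ℝ) - 1) * b * (deriv u r / r) = pucciM lam Lam N u r := by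
  obtain ⟨a, ha, hau⟩ := exists_mem_Icc_mul_eq_mul_max_sub_mul_max h (deriv (deriv u) r)
  obtain ⟨b, hb, hbu⟩ := exists_mem_Icc_mul_eq_mul_max_sub_mul_max h (deriv u r / r)
  exact ⟨a, ha, b, hb, by rw [pucciM, mul_assoc, hau, hbu]⟩

lemma pucciM_eq_pucciP_swap : pucciM lam Lam N = pucciP Lam lam N := rfl

lemma pucciP_rpow_neg {τ r : ℝ} (hτ : 0 ≤ τ) (hr : 0 < r) :
    pucciP lam Lam N (fun x => x ^ (-τ)) r =
      -(τ * (((N : ℝ) - 1) * lam - Lam * (τ + 1))) * (r ^ (-τ) * r ^ (-2 : ℝ)) := by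
  set K := r ^ (-τ) * r ^ (-2 : ℝ) with hK
  have hK0 : 0 ≤ K := by positivity
  have hd1 : deriv (fun x : ℝ => x ^ (-τ)) r / r = -(τ * K) := by
    rw [Real.deriv_rpow_const, hK, ← rpow_add hr, show -τ + -2 = -τ - 1 - 1 by ring,
      rpow_sub_one hr.ne' (-τ - 1)]
    ring
  have hd2 : deriv (deriv fun x : ℝ => x ^ (-τ)) r = τ * (τ + 1) * K := by
    rw [deriv_rpow_const', deriv_const_mul_field, Real.deriv_rpow_const, hK, ← rpow_add hr,
      show -τ + -2 = -τ - 1 - 1 by ring]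
    ring
  have hτK : 0 ≤ τ * K := mul_nonneg hτ hK0
  have hτK2 : 0 ≤ τ * (τ + 1) * K := mul_nonneg (by positivity) hK0
  rw [pucciP, hd1, hd2, neg_neg, max_eq_left hτK2, max_eq_right (neg_nonpos.mpr hτK2),
    max_eq_right (neg_nonpos.mpr hτK), max_eq_left hτK]
  ring

lemma isPosSupersolution_rpow_neg {τ μ : ℝ} (hτ : 0 ≤ τ)
    (hμ : μ ≤ τ * (((N : ℝ) - 1) * lam - Lam * (τ + 1))) :
    IsPosSupersolution (pucciP lam Lam N) 2 μ fun r => r ^ (-τ) := by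
  refine ⟨fun r hr => (contDiffAt_rpow_const_of_ne hr.1.ne').contDiffWithinAt,
    fun r hr => rpow_pos_of_pos hr.1 _, fun r hr => ?_⟩
  have hK : 0 ≤ r ^ (-τ) * r ^ (-2 : ℝ) :=
    mul_nonneg (rpow_nonneg hr.1.le _) (rpow_nonneg hr.1.le _)
  rw [pucciP_rpow_neg hτ hr.1, mul_assoc μ]
  linarith [mul_le_mul_of_nonneg_right hμ hK]

lemma hasHardyBound_pucciP {Np : ℝ} (hN : 2 ≤ N) (hlam : 0 < lam) (hlL : lam ≤ Lam)
    (hNp : Np = lam / Lam * ((N : ℝ) - 1) + 1) :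
    HasHardyBound (pucciP lam Lam N) Lam Lam (Lam * (max (Np - 2) 0 / 2) ^ 2) := by
  have hLam : 0 < Lam := hlam.trans_le hlL
  have hn : (1 : ℝ) ≤ N - 1 := by
    have : (2 : ℝ) ≤ N := by exact_mod_cast hN
    linarith
  have hn0 : (0 : ℝ) < N - 1 := zero_lt_one.trans_le hn
  -- For `Np ≤ 2` the choice `b = Lam / (N - 1)` makes the Hardy constant vanish.
  have hb : max lam (Lam / ((N : ℝ) - 1)) ∈ Icc lam Lam :=
    ⟨le_max_left _ _, max_le hlL (div_le_self hLam.le hn)⟩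
  have hcoeff : ((N : ℝ) - 1) * max lam (Lam / ((N : ℝ) - 1)) - Lam = Lam * max (Np - 2) 0 := by
    rw [mul_max_of_nonneg _ _ hn0.le, mul_max_of_nonneg _ _ hLam.le, ← max_sub_sub_right, hNp]
    congr 1 <;> field_simp <;> ring
  refine fun u r => ⟨Lam, left_mem_Icc.mpr le_rfl, _, ?_,
    le_pucciP (one_le_two.trans hN) (right_mem_Icc.mpr hlL) hb u r⟩
  rw [hcoeff]
  exact le_of_eq (by ring)

lemma hasHardyBound_pucciM {Nm : ℝ} (hN : 2 ≤ N) (hlam : 0 < lam) (hlL : lam ≤ Lam)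
    (hNm : Nm = Lam / lam * ((N : ℝ) - 1) + 1) :
    HasHardyBound (pucciM lam Lam N) lam Lam (lam * ((Nm - 2) / 2) ^ 2) := by
  have hn : (1 : ℝ) ≤ N - 1 := by
    have : (2 : ℝ) ≤ N := by exact_mod_cast hN
    linarith
  have hcoeff : ((N : ℝ) - 1) * Lam - lam = lam * (Nm - 2) := by
    rw [hNm]
    field_simp
    ring
  intro u r
  obtain ⟨a, ha, b, hb, hab⟩ := exists_eq_pucciM (N := N) hlL u r
  refine ⟨a, ha, ((N : ℝ) - 1) * b, ?_, hab.le⟩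
  have hsq : (((N : ℝ) - 1) * b - a) ^ 2 ≤ (((N : ℝ) - 1) * Lam - lam) ^ 2 :=
    sq_le_sq' (by nlinarith [ha.2, hb.1]) (by nlinarith [ha.1, hb.2])
  calc (((N : ℝ) - 1) * b - a) ^ 2 ≤ (((N : ℝ) - 1) * Lam - lam) ^ 2 := hsq
    _ = 4 * lam * (lam * ((Nm - 2) / 2) ^ 2) := by
      rw [hcoeff]
      ring
    _ ≤ 4 * a * (lam * ((Nm - 2) / 2) ^ 2) := by
      gcongr
      exact ha.1

lemma tendsto_radialEVop_pucciP {Np : ℝ} (hN : 2 ≤ N) (hlam : 0 < lam) (hlL : lam ≤ Lam)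
    (hNp : Np = lam / Lam * ((N : ℝ) - 1) + 1) :
    Tendsto (radialEVop (pucciP lam Lam N)) (nhdsWithin 2 (Iic 2))
      (nhds (Lam * (max (Np - 2) 0 / 2) ^ 2)) := by
  have hLam : 0 < Lam := hlam.trans_le hlL
  refine (hasHardyBound_pucciP hN hlam hlL hNp).tendsto_radialEVop hLam
    (isPosSupersolution_rpow_neg (τ := max (Np - 2) 0 / 2) (by positivity) ?_)
  have hcoeff : ((N : ℝ) - 1) * lam = Lam * (Np - 1) := by
    rw [hNp]
    field_simp
    ring
  rw [hcoeff]
  rcases le_total (Np - 2) 0 with h | h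
  · simp [h]
  · rw [max_eq_left h]
    exact le_of_eq (by ring)

lemma tendsto_radialEVop_pucciM {Nm : ℝ} (hN : 2 ≤ N) (hlam : 0 < lam) (hlL : lam ≤ Lam)
    (hNm : Nm = Lam / lam * ((N : ℝ) - 1) + 1) :
    Tendsto (radialEVop (pucciM lam Lam N)) (nhdsWithin 2 (Iic 2))
      (nhds (lam * ((Nm - 2) / 2) ^ 2)) := by
  have hcoeff : ((N : ℝ) - 1) * Lam = lam * (Nm - 1) := by
    rw [hNm]
    field_simp
    ring
  have hNm2 : 2 ≤ Nm := by
    have hN' : (2 : ℝ) ≤ N := by exact_mod_cast hN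
    nlinarith
  refine (hasHardyBound_pucciM hN hlam hlL hNm).tendsto_radialEVop hlam
    (u := fun r => r ^ (-((Nm - 2) / 2))) ?_
  rw [pucciM_eq_pucciP_swap]
  refine isPosSupersolution_rpow_neg (by linarith) (le_of_eq ?_)
  rw [hcoeff]
  ring

end Pucci

theorem stmt5_general (N : ℕ) (hN : 2 ≤ N) (lam Lam : ℝ) (hlam : 0 < lam) (hlL : lam ≤ Lam)
    (Np Nm : ℝ) (hNpdef : Np = lam / Lam * ((N : ℝ) - 1) + 1)
    (hNmdef : Nm = Lam / lam * ((N : ℝ) - 1) + 1) :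
    Tendsto (radialEVop (pucciP lam Lam N)) (nhdsWithin 2 (Iic 2))
      (nhds (Lam * (max (Np - 2) 0 / 2) ^ 2)) ∧
    Tendsto (radialEVop (pucciM lam Lam N)) (nhdsWithin 2 (Iic 2))
      (nhds (lam * ((Nm - 2) / 2) ^ 2)) :=
  ⟨tendsto_radialEVop_pucciP hN hlam hlL hNpdef, tendsto_radialEVop_pucciM hN hlam hlL hNmdef⟩

theorem stmt5 (N : ℕ) (hN : 2 ≤ N) (lam Lam : ℝ) (hlam : 0 < lam) (hlL : lam ≤ Lam)
    (Np Nm : ℝ) (hNpdef : Np = lam / Lam * ((N : ℝ) - 1) + 1)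
    (hNmdef : Nm = Lam / lam * ((N : ℝ) - 1) + 1) (hNp : 2 < Np) :
    Tendsto (fun γ => radialEVop (pucciP lam Lam N) γ) (nhdsWithin 2 (Ioo 0 2))
      (nhds (Lam * ((Np - 2) / 2) ^ 2)) ∧
    Tendsto (fun γ => radialEVop (pucciM lam Lam N) γ) (nhdsWithin 2 (Ioo 0 2))
      (nhds (lam * ((Nm - 2) / 2) ^ 2)) := by
  have hsub : nhdsWithin (2 : ℝ) (Ioo 0 2) ≤ nhdsWithin 2 (Iic 2) :=
    nhdsWithin_mono 2 fun _ h => h.2.le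
  have h := stmt5_general N hN lam Lam hlam hlL Np Nm hNpdef hNmdef
  rw [max_eq_left (sub_pos.mpr hNp).le] at h
  exact ⟨h.1.mono_left hsub, h.2.mono_left hsub⟩

end
end

section
/- Let 0 < γ < 2, let f : (0,1) → ℝ be continuous and bounded, let β ≥ 0 and b ∈ ℝ. Then there exists a unique bounded function u, continuous on (0,1] and C² on (0,1), satisfying F(D(u''(r), u'(r)/r)) − β·u(r)·r^{−γ} = f(r)·r^{−γ} for all r ∈ (0,1) and u(1) = b. Moreover u extends continuously to [0,1], and the extension is of class C¹ on [0,1) if γ < 1, Lipschitz continuous on [0,1] if γ ≤ 1, and Hölder continuous with exponent 2−γ on [0,1] if γ > 1. -/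
open Set Real Filter MeasureTheory Matrix

noncomputable section

/- Put `p = r ^ γ * (u'' + m * u' / r)` and `q = r ^ γ * u' / r`, so that `u' = r ^ (1 - γ) * q`
and `u'' = r ^ (-γ) * (p - m * q)`. Then `q` is a weighted mean of `p`, `u` is a weighted
primitive of `q`, and the singular equation becomes one between bounded functions. Correcting
`p` by a multiple of the residual is a sup-norm contraction for large `m`, because
`Lam < n * lam` (with `n = N - 1`, this is the condition `Ñ₊ > 2`), as long as `β` is small.

The same inequality provides a singular barrier `r ^ (-τ)`, hence a comparison principle among
bounded solutions that needs no condition at the origin. It gives uniqueness and the bound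
`1 / β` on the solution operator, with which existence propagates from `β` to every `β' < 2 * β`.

Every bounded solution solves a problem with `β = 0`, so it is
`b - ∫ t in r..1, t ^ (1 - γ) * q t` with `q` bounded, and its regularity up to
the origin is that of `r ^ (2 - γ)`. -/

section

open scoped Topology

/-- Continuity and boundedness on a set, for a function that may be arbitrary off the set: the class
in which data and solutions are taken. -/
structure BddContOn {α : Type*} [TopologicalSpace α] (s : Set α) (g : α → ℝ) : Prop where
  continuousOn : ContinuousOn g s
  bounded : ∃ C : ℝ, ∀ x ∈ s, |g x| ≤ C

namespace BddContOn

variable {α : Type*} [TopologicalSpace α] {s t : Set α} {g h : α → ℝ}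

lemma exists_nonneg_bound (hg : BddContOn s g) : ∃ C : ℝ, 0 ≤ C ∧ ∀ x ∈ s, |g x| ≤ C := by
  obtain ⟨C, hC⟩ := hg.bounded
  exact ⟨max C 0, le_max_right _ _, fun x hx => (hC x hx).trans (le_max_left _ _)⟩

lemma mono (hg : BddContOn s g) (hts : t ⊆ s) : BddContOn t g :=
  ⟨hg.continuousOn.mono hts, hg.bounded.imp fun _ hC x hx => hC x (hts hx)⟩

lemma const (c : ℝ) : BddContOn s fun _ => c :=
  ⟨continuousOn_const, |c|, fun _ _ => le_rfl⟩

lemma add (hg : BddContOn s g) (hh : BddContOn s h) : BddContOn s fun x => g x + h x := by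
  obtain ⟨C, hC⟩ := hg.bounded
  obtain ⟨D, hD⟩ := hh.bounded
  exact ⟨hg.continuousOn.add hh.continuousOn, C + D,
    fun x hx => (abs_add_le _ _).trans (add_le_add (hC x hx) (hD x hx))⟩

lemma const_mul (c : ℝ) (hg : BddContOn s g) : BddContOn s fun x => c * g x := by
  obtain ⟨C, hC⟩ := hg.bounded
  refine ⟨continuousOn_const.mul hg.continuousOn, |c| * C, fun x hx => ?_⟩
  rw [abs_mul]
  exact mul_le_mul_of_nonneg_left (hC x hx) (abs_nonneg c)

lemma sub (hg : BddContOn s g) (hh : BddContOn s h) : BddContOn s fun x => g x - h x := by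
  simpa only [neg_one_mul, ← sub_eq_add_neg] using hg.add (hh.const_mul (-1))

theorem exists_fixedPoint {κ : ℝ} (hκ : κ < 1) (T : (α → ℝ) → α → ℝ)
    (hT : ∀ g, BddContOn s g → BddContOn s (T g))
    (hcontr : ∀ g h, BddContOn s g → BddContOn s h → ∀ D : ℝ, 0 ≤ D →
      (∀ x ∈ s, |g x - h x| ≤ D) → ∀ x ∈ s, |T g x - T h x| ≤ κ * D) :
    ∃ g, BddContOn s g ∧ EqOn (T g) g s := by
  let ext (Y : BoundedContinuousFunction s ℝ) : α → ℝ := Function.extend Subtype.val Y 0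
  have ext_apply (Y : BoundedContinuousFunction s ℝ) (x : s) : ext Y x = Y x :=
    Subtype.val_injective.extend_apply _ _ _
  have ext_mem (Y : BoundedContinuousFunction s ℝ) : BddContOn s (ext Y) := by
    refine ⟨?_, ‖Y‖, fun x hx => (congrArg abs (ext_apply Y ⟨x, hx⟩)).trans_le
      (Y.norm_coe_le_norm _)⟩
    rw [continuousOn_iff_continuous_domRestrict]
    exact Y.continuous.congr fun x => (ext_apply Y x).symm
  let S (Y : BoundedContinuousFunction s ℝ) : BoundedContinuousFunction s ℝ :=
    .ofNormedAddCommGroup (s.domRestrict (T (ext Y)))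
      (continuousOn_iff_continuous_domRestrict.1 (hT _ (ext_mem Y)).continuousOn)
      (hT _ (ext_mem Y)).bounded.choose
      fun x => (hT _ (ext_mem Y)).bounded.choose_spec x x.2
  have S_contracting : ContractingWith κ.toNNReal S := by
    refine ⟨Real.toNNReal_lt_one.2 hκ, LipschitzWith.of_dist_le_mul fun Y Z => ?_⟩
    rw [BoundedContinuousFunction.dist_le (by positivity)]
    refine fun x => (hcontr _ _ (ext_mem Y) (ext_mem Z) (dist Y Z) dist_nonneg
      (fun y hy => ?_) x x.2).trans
        (mul_le_mul_of_nonneg_right (Real.le_coe_toNNReal κ) dist_nonneg)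
    rw [ext_apply Y ⟨y, hy⟩, ext_apply Z ⟨y, hy⟩, ← Real.dist_eq]
    exact BoundedContinuousFunction.dist_coe_le_dist _
  obtain ⟨Y, hY⟩ : ∃ Y, S Y = Y := ⟨_, S_contracting.fixedPoint_isFixedPt⟩
  exact ⟨ext Y, ext_mem Y, fun x hx => (DFunLike.congr_fun hY ⟨x, hx⟩).trans
    (ext_apply Y ⟨x, hx⟩).symm⟩

end BddContOn

/-! ### Real functions -/

lemma nonpos_of_hasDerivAt_of_isLocalMax {f f' : ℝ → ℝ} {c x : ℝ}
    (hf : ∀ᶠ y in 𝓝 x, HasDerivAt f (f' y) y) (hf' : HasDerivAt f' c x) (hmax : IsLocalMax f x) :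
    c ≤ 0 := by
  have hderiv : deriv f =ᶠ[𝓝 x] f' := hf.mono fun y hy => hy.deriv
  have hdd : deriv (deriv f) x = c := hderiv.deriv_eq.trans hf'.deriv
  by_contra! hc
  have hmin : IsLocalMin f x := isLocalMin_of_deriv_deriv_pos (hdd.symm ▸ hc) hmax.deriv_eq_zero
    hf.self_of_nhds.continuousAt
  have hconst : f =ᶠ[𝓝 x] fun _ => f x := by
    filter_upwards [hmax, hmin] with y hle hge using le_antisymm hle hge
  have hzero : deriv (deriv f) x = 0 := by
    rw [hconst.deriv.deriv_eq]
    simp only [deriv_const', deriv_const]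
  exact hc.ne (hzero.symm.trans hdd)

lemma hasDerivAt_of_contDiffOn_two {u : ℝ → ℝ} {s : Set ℝ} (hs : IsOpen s)
    (hu : ContDiffOn ℝ 2 u s) {x : ℝ} (hx : x ∈ s) :
    HasDerivAt u (deriv u x) x ∧ HasDerivAt (deriv u) (deriv (deriv u) x) x := by
  have hu' : ContDiffOn ℝ 1 (deriv u) s := hu.deriv_of_isOpen hs (by norm_num)
  exact ⟨((hu.differentiableOn (by norm_num)).differentiableAt (hs.mem_nhds hx)).hasDerivAt,
    ((hu'.differentiableOn (by norm_num)).differentiableAt (hs.mem_nhds hx)).hasDerivAt⟩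

lemma contDiffOn_one_of_hasDerivAt {u u' : ℝ → ℝ} {s : Set ℝ} (hs : IsOpen s)
    (hu : ∀ x ∈ s, HasDerivAt u (u' x) x) (hu' : ContinuousOn u' s) : ContDiffOn ℝ 1 u s := by
  rw [contDiffOn_one_iff_derivWithin hs.uniqueDiffOn]
  exact ⟨fun x hx => (hu x hx).differentiableAt.differentiableWithinAt, hu'.congr fun x hx =>
    (hu x hx).hasDerivWithinAt.derivWithin (hs.uniqueDiffOn x hx)⟩

lemma contDiffOn_two_of_hasDerivAt_s11 {u u' u'' : ℝ → ℝ} {s : Set ℝ} (hs : IsOpen s)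
    (hu : ∀ x ∈ s, HasDerivAt u (u' x) x) (hu' : ∀ x ∈ s, HasDerivAt u' (u'' x) x)
    (hu'' : ContinuousOn u'' s) : ContDiffOn ℝ 2 u s := by
  rw [show (2 : WithTop ℕ∞) = 1 + 1 by norm_num, contDiffOn_succ_iff_deriv_of_isOpen hs]
  refine ⟨fun x hx => (hu x hx).differentiableAt.differentiableWithinAt, by simp, ?_⟩
  exact (contDiffOn_one_of_hasDerivAt hs hu' hu'').congr fun x hx => (hu x hx).deriv

lemma contDiffOn_one_Ico_of_hasDerivAt {u u' : ℝ → ℝ} {a b : ℝ} (hu : ContinuousOn u (Ico a b))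
    (hderiv : ∀ x ∈ Ioo a b, HasDerivAt u (u' x) x) (hu' : ContinuousOn u' (Ico a b)) :
    ContDiffOn ℝ 1 u (Ico a b) := by
  have hwithin : ∀ x ∈ Ico a b, HasDerivWithinAt u (u' x) (Ico a b) x := by
    intro x hx
    rcases hx.1.eq_or_lt with rfl | hax
    · have hnhds : Ioo a b ∈ 𝓝[>] a := Ioo_mem_nhdsGT hx.2
      have hlim : Tendsto u' (𝓝[>] a) (𝓝 (u' a)) :=
        (hu' a hx).mono_left (nhdsWithin_le_iff.2 (mem_of_superset hnhds Ioo_subset_Ico_self))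
      refine (hasDerivWithinAt_Ici_of_tendsto_deriv
        (fun y hy => (hderiv y hy).differentiableAt.differentiableWithinAt)
        ((hu a hx).mono Ioo_subset_Ico_self) hnhds (hlim.congr' ?_)).mono Ico_subset_Ici_self
      filter_upwards [hnhds] with y hy using (hderiv y hy).deriv.symm
    · exact (hderiv x ⟨hax, hx.2⟩).hasDerivWithinAt
  rw [contDiffOn_one_iff_derivWithin (uniqueDiffOn_Ico a b)]
  exact ⟨fun x hx => (hwithin x hx).differentiableWithinAt, hu'.congr fun x hx =>
    (hwithin x hx).derivWithin (uniqueDiffOn_Ico a b x hx)⟩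

lemma continuousOn_rpow_const_of_pos {s : Set ℝ} (hs : ∀ x ∈ s, 0 < x) (c : ℝ) :
    ContinuousOn (fun x : ℝ => x ^ c) s :=
  continuousOn_id.rpow_const fun x hx => .inl (hs x hx).ne'

lemma abs_rpow_sub_rpow_le_abs_sub_rpow {s x y : ℝ} (hs0 : 0 ≤ s) (hs1 : s ≤ 1) (hx : 0 ≤ x)
    (hy : 0 ≤ y) : |x ^ s - y ^ s| ≤ |x - y| ^ s := by
  wlog hyx : y ≤ x generalizing x y
  · rw [abs_sub_comm, abs_sub_comm x]
    exact this hy hx (not_le.1 hyx).le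
  have hsubadd : (y + (x - y)) ^ s ≤ y ^ s + (x - y) ^ s := by
    exact_mod_cast NNReal.rpow_add_le_add_rpow ⟨y, hy⟩ ⟨x - y, sub_nonneg.2 hyx⟩ hs0 hs1
  rw [add_sub_cancel] at hsubadd
  rw [abs_of_nonneg (sub_nonneg.2 (Real.rpow_le_rpow hy hyx hs0)), abs_of_nonneg (sub_nonneg.2 hyx)]
  linarith

lemma abs_rpow_sub_rpow_le_mul_abs_sub {s x y : ℝ} (hs : 1 ≤ s) (hx : x ∈ Icc (0 : ℝ) 1)
    (hy : y ∈ Icc (0 : ℝ) 1) : |x ^ s - y ^ s| ≤ s * |x - y| := by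
  refine (convex_Icc (0 : ℝ) 1).norm_image_sub_le_of_norm_hasDerivWithin_le
    (f := fun t : ℝ => t ^ s)
    (fun t _ => (Real.hasDerivAt_rpow_const (Or.inr hs)).hasDerivWithinAt) (fun t ht => ?_) hy hx
  have hs0 : 0 ≤ s := zero_le_one.trans hs
  rw [Real.norm_eq_abs, abs_of_nonneg (mul_nonneg hs0 (Real.rpow_nonneg ht.1 _))]
  exact mul_le_of_le_one_right hs0 (Real.rpow_le_one ht.1 ht.2 (sub_nonneg.2 hs))


/-! ### Weighted primitives and means -/

/-- The primitive, based at `c`, of `g` against the weight `t ^ (s - 1)`. -/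
def powPrimitive (c s : ℝ) (g : ℝ → ℝ) (r : ℝ) : ℝ := ∫ t in c..r, t ^ (s - 1) * g t

/-- `1 / s` times the mean of `g` over `(0, r)` for the probability density proportional to
`t ^ (s - 1)`. It is the bounded solution `q` of `r q' + s q = g`. -/
def powMean (s : ℝ) (g : ℝ → ℝ) (r : ℝ) : ℝ := r ^ (-s) * powPrimitive 0 s g r

section PowPrimitive

variable {c s : ℝ} {g h : ℝ → ℝ}

lemma powPrimitive_self (c s : ℝ) (g : ℝ → ℝ) : powPrimitive c s g c = 0 :=
  intervalIntegral.integral_same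

lemma BddContOn.intervalIntegrable_rpow_mul (hs : 0 < s) (hg : BddContOn (Ioo 0 1) g) {x y : ℝ}
    (hx : x ∈ Icc (0 : ℝ) 1) (hy : y ∈ Icc (0 : ℝ) 1) :
    IntervalIntegrable (fun t => t ^ (s - 1) * g t) volume x y := by
  have hunit : IntervalIntegrable (fun t => t ^ (s - 1) * g t) volume 0 1 := by
    have hpow : IntervalIntegrable (fun t : ℝ => t ^ (s - 1)) volume 0 1 :=
      intervalIntegral.intervalIntegrable_rpow' (by linarith)
    obtain ⟨C, hC⟩ := hg.bounded
    rw [intervalIntegrable_iff_integrableOn_Ioo_of_le zero_le_one] at hpow ⊢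
    exact hpow.mul_bdd (hg.continuousOn.aestronglyMeasurable measurableSet_Ioo)
      ((ae_restrict_iff' measurableSet_Ioo).2 (.of_forall hC))
  refine hunit.mono_set ?_
  rw [uIcc_of_le (zero_le_one (α := ℝ))]
  exact uIcc_subset_Icc hx hy

lemma powPrimitive_sub_powPrimitive (hs : 0 < s) (hc : c ∈ Icc (0 : ℝ) 1)
    (hg : BddContOn (Ioo 0 1) g) (hh : BddContOn (Ioo 0 1) h) {x : ℝ} (hx : x ∈ Icc (0 : ℝ) 1) :
    powPrimitive c s g x - powPrimitive c s h x = powPrimitive c s (fun t => g t - h t) x := by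
  simp only [powPrimitive, mul_sub]
  exact (intervalIntegral.integral_sub (hg.intervalIntegrable_rpow_mul hs hc hx)
    (hh.intervalIntegrable_rpow_mul hs hc hx)).symm

lemma abs_powPrimitive_sub_le (hs : 0 < s) (hc : c ∈ Icc (0 : ℝ) 1) (hg : BddContOn (Ioo 0 1) g)
    {C : ℝ} (hC0 : 0 ≤ C) (hC : ∀ r ∈ Ioo (0 : ℝ) 1, |g r| ≤ C) {x y : ℝ}
    (hx : x ∈ Icc (0 : ℝ) 1) (hy : y ∈ Icc (0 : ℝ) 1) :
    |powPrimitive c s g x - powPrimitive c s g y| ≤ C / s * |x ^ s - y ^ s| := by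
  have hs1 : -1 < s - 1 := by linarith
  have hbound : ∀ᵐ t ∂volume.restrict (uIoc y x), ‖t ^ (s - 1) * g t‖ ≤ t ^ (s - 1) * C := by
    have hne : ∀ᵐ t : ℝ, t ≠ 1 := by simp [ae_iff]
    refine (ae_restrict_iff' measurableSet_uIoc).2 ?_
    filter_upwards [hne] with t ht1 ht
    have htI : t ∈ Ioo (0 : ℝ) 1 := ⟨(le_min hy.1 hx.1).trans_lt ht.1,
      (ht.2.trans (max_le hy.2 hx.2)).lt_of_ne ht1⟩
    have htp : 0 ≤ t ^ (s - 1) := Real.rpow_nonneg htI.1.le _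
    rw [norm_mul, Real.norm_of_nonneg htp]
    exact mul_le_mul_of_nonneg_left (hC t htI) htp
  calc |powPrimitive c s g x - powPrimitive c s g y|
      = |∫ t in y..x, t ^ (s - 1) * g t| := congrArg abs <|
        intervalIntegral.integral_interval_sub_left (hg.intervalIntegrable_rpow_mul hs hc hx)
          (hg.intervalIntegrable_rpow_mul hs hc hy)
    _ ≤ |∫ t in y..x, t ^ (s - 1) * C| :=
        intervalIntegral.norm_integral_le_abs_of_norm_le hbound
          ((intervalIntegral.intervalIntegrable_rpow' hs1).mul_const C)
    _ = |C / s * (x ^ s - y ^ s)| := by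
        rw [intervalIntegral.integral_mul_const, integral_rpow (.inl hs1), sub_add_cancel]
        congr 1
        ring
    _ = C / s * |x ^ s - y ^ s| := by rw [abs_mul, abs_of_nonneg (by positivity)]

lemma hasDerivAt_powPrimitive (hs : 0 < s) (hc : c ∈ Icc (0 : ℝ) 1) (hg : BddContOn (Ioo 0 1) g)
    {x : ℝ} (hx : x ∈ Ioo (0 : ℝ) 1) :
    HasDerivAt (powPrimitive c s g) (x ^ (s - 1) * g x) x := by
  have hcont : ContinuousOn (fun t : ℝ => t ^ (s - 1) * g t) (Ioo 0 1) :=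
    (continuousOn_rpow_const_of_pos (fun _ ht => ht.1) _).mul hg.continuousOn
  exact intervalIntegral.integral_hasDerivAt_right
    (hg.intervalIntegrable_rpow_mul hs hc (Ioo_subset_Icc_self hx))
    (hcont.stronglyMeasurableAtFilter isOpen_Ioo x hx) (hcont.continuousAt (Ioo_mem_nhds hx.1 hx.2))

lemma continuousOn_powPrimitive (hs : 0 < s) (hc : c ∈ Icc (0 : ℝ) 1)
    (hg : BddContOn (Ioo 0 1) g) : ContinuousOn (powPrimitive c s g) (Icc 0 1) := by
  rw [← uIcc_of_le (zero_le_one (α := ℝ))] at hc ⊢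
  exact intervalIntegral.continuousOn_primitive_interval'
    (hg.intervalIntegrable_rpow_mul hs unitInterval.zero_mem unitInterval.one_mem) hc

lemma bddContOn_powPrimitive (hs : 0 < s) (hc : c ∈ Icc (0 : ℝ) 1) (hg : BddContOn (Ioo 0 1) g) :
    BddContOn (Icc 0 1) (powPrimitive c s g) :=
  ⟨continuousOn_powPrimitive hs hc hg,
    isCompact_Icc.exists_bound_of_continuousOn (continuousOn_powPrimitive hs hc hg)⟩

lemma contDiffOn_powPrimitive (hs : 1 < s) (hc : c ∈ Icc (0 : ℝ) 1)
    (hg : BddContOn (Ioo 0 1) g) : ContDiffOn ℝ 1 (powPrimitive c s g) (Ico 0 1) := by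
  have hs0 : 0 < s := one_pos.trans hs
  refine contDiffOn_one_Ico_of_hasDerivAt
    ((continuousOn_powPrimitive hs0 hc hg).mono Ico_subset_Icc_self)
    (fun x hx => hasDerivAt_powPrimitive hs0 hc hg hx) fun x hx => ?_
  rcases hx.1.eq_or_lt with rfl | hx0
  · obtain ⟨C, hC⟩ := hg.bounded
    have hlim : Tendsto (fun t : ℝ => t ^ (s - 1) * C) (𝓝 0) (𝓝 0) := by
      simpa [Real.zero_rpow (sub_pos.2 hs).ne'] using
        (Real.continuousAt_rpow_const 0 (s - 1) (.inr (sub_pos.2 hs).le)).tendsto.mul_const C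
    rw [ContinuousWithinAt, Real.zero_rpow (sub_pos.2 hs).ne', zero_mul]
    refine squeeze_zero_norm' ?_ (hlim.mono_left nhdsWithin_le_nhds)
    filter_upwards [self_mem_nhdsWithin] with t ht
    rcases ht.1.eq_or_lt with rfl | ht0
    · simp [Real.zero_rpow (sub_pos.2 hs).ne']
    · have htp : 0 ≤ t ^ (s - 1) := Real.rpow_nonneg ht.1 _
      rw [norm_mul, Real.norm_of_nonneg htp]
      exact mul_le_mul_of_nonneg_left (hC t ⟨ht0, ht.2⟩) htp
  · exact ((Real.continuousAt_rpow_const x _ (.inl hx0.ne')).mul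
      (hg.continuousOn.continuousAt (Ioo_mem_nhds hx0 hx.2))).continuousWithinAt

lemma abs_powPrimitive_sub_le_mul_abs_sub (hs : 1 ≤ s) (hc : c ∈ Icc (0 : ℝ) 1)
    (hg : BddContOn (Ioo 0 1) g) : ∃ K : ℝ, ∀ x ∈ Icc (0 : ℝ) 1, ∀ y ∈ Icc (0 : ℝ) 1,
      |powPrimitive c s g x - powPrimitive c s g y| ≤ K * |x - y| := by
  have hs0 : 0 < s := one_pos.trans_le hs
  obtain ⟨C, hC0, hC⟩ := hg.exists_nonneg_bound
  refine ⟨C / s * s, fun x hx y hy => (abs_powPrimitive_sub_le hs0 hc hg hC0 hC hx hy).trans ?_⟩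
  rw [mul_assoc]
  exact mul_le_mul_of_nonneg_left (abs_rpow_sub_rpow_le_mul_abs_sub hs hx hy) (by positivity)

lemma abs_powPrimitive_sub_le_mul_abs_sub_rpow (hs0 : 0 < s) (hs1 : s ≤ 1)
    (hc : c ∈ Icc (0 : ℝ) 1) (hg : BddContOn (Ioo 0 1) g) :
    ∃ K : ℝ, ∀ x ∈ Icc (0 : ℝ) 1, ∀ y ∈ Icc (0 : ℝ) 1,
      |powPrimitive c s g x - powPrimitive c s g y| ≤ K * |x - y| ^ s := by
  obtain ⟨C, hC0, hC⟩ := hg.exists_nonneg_bound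
  exact ⟨C / s, fun x hx y hy => (abs_powPrimitive_sub_le hs0 hc hg hC0 hC hx hy).trans <|
    mul_le_mul_of_nonneg_left (abs_rpow_sub_rpow_le_abs_sub_rpow hs0.le hs1 hx.1 hy.1)
      (by positivity)⟩

lemma abs_powMean_le (hs : 0 < s) (hg : BddContOn (Ioo 0 1) g) {C : ℝ} (hC0 : 0 ≤ C)
    (hC : ∀ r ∈ Ioo (0 : ℝ) 1, |g r| ≤ C) {r : ℝ} (hr : r ∈ Ioo (0 : ℝ) 1) :
    |powMean s g r| ≤ C / s := by
  have hprim := abs_powPrimitive_sub_le hs unitInterval.zero_mem hg hC0 hC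
    (Ioo_subset_Icc_self hr) unitInterval.zero_mem
  rw [powPrimitive_self, Real.zero_rpow hs.ne', sub_zero, sub_zero,
    abs_of_pos (Real.rpow_pos_of_pos hr.1 s)] at hprim
  rw [powMean, abs_mul, abs_of_pos (Real.rpow_pos_of_pos hr.1 _), Real.rpow_neg hr.1.le]
  rwa [inv_mul_le_iff₀ (Real.rpow_pos_of_pos hr.1 s), mul_comm]

lemma powMean_sub_powMean (hs : 0 < s) (hg : BddContOn (Ioo 0 1) g) (hh : BddContOn (Ioo 0 1) h)
    {r : ℝ} (hr : r ∈ Icc (0 : ℝ) 1) :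
    powMean s g r - powMean s h r = powMean s (fun t => g t - h t) r := by
  rw [powMean, powMean, ← mul_sub,
    powPrimitive_sub_powPrimitive hs unitInterval.zero_mem hg hh hr, powMean]

lemma hasDerivAt_powMean (hs : 0 < s) (hg : BddContOn (Ioo 0 1) g) {x : ℝ}
    (hx : x ∈ Ioo (0 : ℝ) 1) :
    HasDerivAt (powMean s g) ((g x - s * powMean s g x) / x) x := by
  have hx0 : x ≠ 0 := hx.1.ne'
  refine ((Real.hasDerivAt_rpow_const (.inl hx0)).mul
    (hasDerivAt_powPrimitive hs unitInterval.zero_mem hg hx)).congr_deriv ?_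
  have hcancel : x ^ (-s) * x ^ s = 1 := by rw [← Real.rpow_add hx.1, neg_add_cancel, rpow_zero]
  rw [Real.rpow_sub_one hx0, Real.rpow_sub_one hx0, powMean]
  linear_combination g x / x * hcancel

lemma bddContOn_powMean (hs : 0 < s) (hg : BddContOn (Ioo 0 1) g) :
    BddContOn (Ioo 0 1) (powMean s g) := by
  obtain ⟨C, hC0, hC⟩ := hg.exists_nonneg_bound
  exact ⟨fun x hx => (hasDerivAt_powMean hs hg hx).continuousAt.continuousWithinAt, C / s,
    fun r hr => abs_powMean_le hs hg hC0 hC hr⟩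

end PowPrimitive

/-! ### Radial ellipticity and comparison -/

/-- The form taken on radial functions, with `a = u''` and `y = u' / r`, by uniform ellipticity with
constants `lam ≤ Lam` in dimension `n + 1`. The increment of `G` is required to be that of a linear
operator whose coefficients obey the ellipticity bounds. The condition `Lam < n * lam` says that the
dimension-like parameter `lam / Lam * n + 1` exceeds `2`. -/
structure RadiallyElliptic (G : ℝ → ℝ → ℝ) (lam Lam n : ℝ) : Prop where
  lam_pos : 0 < lam
  lt_mul : Lam < n * lam
  exists_slopes : ∀ a y a' y', ∃ k ∈ Icc lam Lam, ∃ l ∈ Icc (n * lam) (n * Lam),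
    G a y - G a' y' = k * (a - a') + l * (y - y')

/-- The operator `r ^ γ * G (r ^ (-γ) * a) (r ^ (-γ) * y)` acting on the rescaled variables
`r ^ γ * u''` and `r ^ γ * (u' / r)`, which stay bounded as `r → 0`. -/
def rescale (γ : ℝ) (G : ℝ → ℝ → ℝ) (r a y : ℝ) : ℝ := r ^ γ * G (r ^ (-γ) * a) (r ^ (-γ) * y)

namespace RadiallyElliptic

variable {G : ℝ → ℝ → ℝ} {lam Lam n : ℝ}

lemma lam_le (hG : RadiallyElliptic G lam Lam n) : lam ≤ Lam := by
  obtain ⟨k, hk, -⟩ := hG.exists_slopes 0 0 0 0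
  exact hk.1.trans hk.2

lemma one_lt (hG : RadiallyElliptic G lam Lam n) : 1 < n := by
  have hlam := hG.lam_pos
  nlinarith [hG.lam_le, hG.lt_mul]

lemma abs_sub_le (hG : RadiallyElliptic G lam Lam n) (a y a' y' : ℝ) :
    |G a y - G a' y'| ≤ Lam * |a - a'| + n * Lam * |y - y'| := by
  obtain ⟨k, hk, l, hl, hkl⟩ := hG.exists_slopes a y a' y'
  have hl0 : 0 ≤ l := (mul_pos (one_pos.trans hG.one_lt) hG.lam_pos).le.trans hl.1
  rw [hkl]
  refine (abs_add_le _ _).trans (add_le_add ?_ ?_)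
  · rw [abs_mul, abs_of_nonneg (hG.lam_pos.le.trans hk.1)]
    exact mul_le_mul_of_nonneg_right hk.2 (abs_nonneg _)
  · rw [abs_mul, abs_of_nonneg hl0]
    exact mul_le_mul_of_nonneg_right hl.2 (abs_nonneg _)

lemma continuous_uncurry (hG : RadiallyElliptic G lam Lam n) : Continuous (Function.uncurry G) := by
  refine continuous_iff_continuousAt.2 fun z => tendsto_iff_dist_tendsto_zero.2 ?_
  have hlim : Tendsto (fun x : ℝ × ℝ => Lam * |x.1 - z.1| + n * Lam * |x.2 - z.2|) (𝓝 z) (𝓝 0) := by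
    have hcont : Continuous fun x : ℝ × ℝ => Lam * |x.1 - z.1| + n * Lam * |x.2 - z.2| := by
      fun_prop
    simpa using hcont.tendsto z
  exact squeeze_zero (fun _ => dist_nonneg) (fun x => hG.abs_sub_le x.1 x.2 z.1 z.2) hlim

protected lemma rescale (hG : RadiallyElliptic G lam Lam n) (γ : ℝ) {r : ℝ} (hr : 0 < r) :
    RadiallyElliptic (rescale γ G r) lam Lam n := by
  refine ⟨hG.lam_pos, hG.lt_mul, fun a y a' y' => ?_⟩
  obtain ⟨k, hk, l, hl, hkl⟩ :=
    hG.exists_slopes (r ^ (-γ) * a) (r ^ (-γ) * y) (r ^ (-γ) * a') (r ^ (-γ) * y')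
  have hcancel : r ^ γ * r ^ (-γ) = 1 := by
    rw [← Real.rpow_add hr, add_neg_cancel, Real.rpow_zero]
  refine ⟨k, hk, l, hl, ?_⟩
  simp only [rescale, ← mul_sub, hkl]
  linear_combination (k * (a - a') + l * (y - y')) * hcancel

lemma bddContOn_rescale (hG : RadiallyElliptic G lam Lam n) {γ : ℝ} (hγ : 0 ≤ γ) {a y : ℝ → ℝ}
    (ha : BddContOn (Ioo 0 1) a) (hy : BddContOn (Ioo 0 1) y) :
    BddContOn (Ioo 0 1) fun r => rescale γ G r (a r) (y r) := by
  have hpow (c : ℝ) : ContinuousOn (fun r : ℝ => r ^ c) (Ioo 0 1) :=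
    continuousOn_rpow_const_of_pos (fun _ hr => hr.1) c
  obtain ⟨A, hA⟩ := ha.bounded
  obtain ⟨Y, hY⟩ := hy.bounded
  refine ⟨(hpow γ).mul (hG.continuous_uncurry.comp_continuousOn
    (((hpow (-γ)).mul ha.continuousOn).prodMk ((hpow (-γ)).mul hy.continuousOn))),
    Lam * A + n * Lam * Y + |G 0 0|, fun r hr => ?_⟩
  have hLam : 0 ≤ Lam := hG.lam_pos.le.trans hG.lam_le
  have hincr : |rescale γ G r (a r) (y r) - rescale γ G r 0 0|
      ≤ Lam * A + n * Lam * Y := by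
    refine ((hG.rescale γ hr.1).abs_sub_le _ _ _ _).trans ?_
    rw [sub_zero, sub_zero]
    exact add_le_add (mul_le_mul_of_nonneg_left (hA r hr) hLam)
      (mul_le_mul_of_nonneg_left (hY r hr) (mul_nonneg (one_pos.trans hG.one_lt).le hLam))
  have hzero : |rescale γ G r 0 0| ≤ |G 0 0| := by
    rw [rescale, mul_zero, abs_mul, abs_of_pos (Real.rpow_pos_of_pos hr.1 γ)]
    exact mul_le_of_le_one_left (abs_nonneg _) (Real.rpow_le_one hr.1.le hr.2.le hγ)
  have htri := abs_sub_abs_le_abs_sub (rescale γ G r (a r) (y r)) (rescale γ G r 0 0)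
  linarith

end RadiallyElliptic

lemma exists_isLocalMax_sub_mul {w φ : ℝ → ℝ} (hw : BddContOn (Ioc 0 1) w)
    (hφc : ContinuousOn φ (Ioc 0 1)) (hφ0 : ∀ r ∈ Ioc (0 : ℝ) 1, 0 ≤ φ r)
    (hφ : Tendsto φ (𝓝[>] 0) atTop) {η : ℝ} (h1 : w 1 ≤ η) {x₀ : ℝ} (hx₀ : x₀ ∈ Ioc (0 : ℝ) 1)
    (hη : η < w x₀) :
    ∃ ε > 0, ∃ x ∈ Ioo (0 : ℝ) 1, IsLocalMax (fun r => w r - ε * φ r) x ∧ η < w x := by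
  obtain ⟨C, hC⟩ := hw.bounded
  obtain ⟨ε, hε, hεη⟩ : ∃ ε > 0, η < w x₀ - ε * φ x₀ := by
    have hφx₀ : 0 < φ x₀ + 1 := add_pos_of_nonneg_of_pos (hφ0 x₀ hx₀) one_pos
    refine ⟨(w x₀ - η) / (φ x₀ + 1), div_pos (sub_pos.2 hη) hφx₀, ?_⟩
    rw [div_mul_eq_mul_div, lt_sub_comm, div_lt_iff₀ hφx₀]
    linarith
  obtain ⟨a, haφ, ha⟩ : ∃ a, (C - η) / ε < φ a ∧ a ∈ Ioo 0 x₀ :=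
    ((hφ.eventually_gt_atTop _).and (Ioo_mem_nhdsGT hx₀.1)).exists
  have hle1 : Icc a 1 ⊆ Ioc 0 1 := fun r hr => ⟨ha.1.trans_le hr.1, hr.2⟩
  obtain ⟨x, hx, hmax⟩ := isCompact_Icc.exists_isMaxOn
    (f := fun r => w r - ε * φ r) ⟨x₀, ha.2.le, hx₀.2⟩
    ((hw.continuousOn.mono hle1).sub (continuousOn_const.mul (hφc.mono hle1)))
  have hηx : η < w x - ε * φ x := hεη.trans_le (hmax ⟨ha.2.le, hx₀.2⟩)
  have hxa : x ≠ a := by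
    rintro rfl
    rw [div_lt_iff₀ hε] at haφ
    linarith [le_of_abs_le (hC x (hle1 hx))]
  have hx1 : x ≠ 1 := by
    rintro rfl
    linarith [mul_nonneg hε.le (hφ0 1 (hle1 hx))]
  refine ⟨ε, hε, x, ⟨(hle1 hx).1, hx.2.lt_of_ne hx1⟩,
    hmax.isLocalMax (Icc_mem_nhds (hx.1.lt_of_ne' hxa) (hx.2.lt_of_ne hx1)), ?_⟩
  linarith [mul_nonneg hε.le (hφ0 x (hle1 hx))]

lemma deriv_div_eq_and_deriv_le_of_isLocalMax_sub_rpow {w w' : ℝ → ℝ} {a x ε τ : ℝ} (hx : 0 < x)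
    (hw : ∀ᶠ y in 𝓝 x, HasDerivAt w (w' y) y) (hw' : HasDerivAt w' a x)
    (hmax : IsLocalMax (fun r => w r - ε * r ^ (-τ)) x) :
    w' x / x = -(ε * τ * x ^ (-τ - 2)) ∧ a ≤ (τ + 1) * (ε * τ * x ^ (-τ - 2)) := by
  have hpow {y : ℝ} (hy : 0 < y) (c : ℝ) : HasDerivAt (fun r : ℝ => r ^ c) (c * y ^ (c - 1)) y :=
    Real.hasDerivAt_rpow_const (.inl hy.ne')
  have hderiv : ∀ᶠ y in 𝓝 x,
      HasDerivAt (fun r => w r - ε * r ^ (-τ)) (w' y - ε * (-τ * y ^ (-τ - 1))) y := by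
    filter_upwards [hw, lt_mem_nhds hx] with y hy hy0 using hy.sub ((hpow hy0 _).const_mul ε)
  have hfirst : w' x - ε * (-τ * x ^ (-τ - 1)) = 0 :=
    hmax.hasDerivAt_eq_zero hderiv.self_of_nhds
  have hsecond : a - ε * (-τ * ((-τ - 1) * x ^ (-τ - 1 - 1))) ≤ 0 :=
    nonpos_of_hasDerivAt_of_isLocalMax hderiv
      (hw'.sub (((hpow hx _).const_mul _).const_mul ε)) hmax
  rw [show -τ - 1 - 1 = -τ - 2 by ring] at hsecond
  rw [show -τ - 1 = -τ - 2 + 1 by ring, Real.rpow_add_one hx.ne'] at hfirst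
  refine ⟨?_, by linarith⟩
  rw [div_eq_iff hx.ne']
  linarith

/- `r ^ (-τ)` is a strict supersolution, singular at the origin, of the linearised equations as soon
as `Lam * (τ + 1) < n * lam`. Subtracting a small multiple of it forces an interior maximum, so that
no condition at the origin is needed. -/
theorem RadiallyElliptic.comparison {G : ℝ → ℝ → ℝ} {lam Lam n : ℝ}
    (hG : RadiallyElliptic G lam Lam n) {u₁ u₂ : ℝ → ℝ} {η : ℝ}
    (hu₁ : BddContOn (Ioc 0 1) u₁) (hu₂ : BddContOn (Ioc 0 1) u₂)
    (hd₁ : ContDiffOn ℝ 2 u₁ (Ioo 0 1)) (hd₂ : ContDiffOn ℝ 2 u₂ (Ioo 0 1))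
    (h1 : u₁ 1 - u₂ 1 ≤ η)
    (hop : ∀ r ∈ Ioo (0 : ℝ) 1, η < u₁ r - u₂ r →
      G (deriv (deriv u₂) r) (deriv u₂ r / r) ≤ G (deriv (deriv u₁) r) (deriv u₁ r / r))
    {r : ℝ} (hr : r ∈ Ioc (0 : ℝ) 1) : u₁ r - u₂ r ≤ η := by
  by_contra! hη
  have hLam : 0 < Lam := hG.lam_pos.trans_le hG.lam_le
  obtain ⟨τ, hτ0, hτ⟩ : ∃ τ > 0, Lam * (τ + 1) < n * lam := by
    obtain ⟨σ, hσ1, hσ⟩ := exists_between ((one_lt_div hLam).2 hG.lt_mul)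
    refine ⟨σ - 1, sub_pos.2 hσ1, ?_⟩
    rwa [sub_add_cancel, mul_comm, ← lt_div_iff₀ hLam]
  obtain ⟨ε, hε, x, hx, hmax, hηx⟩ := exists_isLocalMax_sub_mul (hu₁.sub hu₂)
    (continuousOn_rpow_const_of_pos (fun _ hy => hy.1) (-τ))
    (fun y hy => Real.rpow_nonneg hy.1.le _) (tendsto_rpow_neg_nhdsGT_zero (neg_lt_zero.2 hτ0))
    h1 hr hη
  have hd {u : ℝ → ℝ} (hu : ContDiffOn ℝ 2 u (Ioo 0 1)) (y : ℝ) (hy : y ∈ Ioo (0 : ℝ) 1) :=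
    hasDerivAt_of_contDiffOn_two isOpen_Ioo hu hy
  obtain ⟨hfirst, hsecond⟩ := deriv_div_eq_and_deriv_le_of_isLocalMax_sub_rpow hx.1
    (eventually_of_mem (Ioo_mem_nhds hx.1 hx.2)
      fun y hy => (hd hd₁ y hy).1.sub (hd hd₂ y hy).1)
    ((hd hd₁ x hx).2.sub (hd hd₂ x hx).2) hmax
  rw [sub_div] at hfirst
  obtain ⟨k, hk, l, hl, hkl⟩ := hG.exists_slopes (deriv (deriv u₁) x) (deriv u₁ x / x)
    (deriv (deriv u₂) x) (deriv u₂ x / x)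
  have hq : 0 < ε * τ * x ^ (-τ - 2) := mul_pos (mul_pos hε hτ0) (Real.rpow_pos_of_pos hx.1 _)
  have hkτ : k * (τ + 1) < l :=
    ((mul_le_mul_of_nonneg_right hk.2 (by positivity)).trans_lt hτ).trans_le hl.1
  refine (hop x hx hηx).not_gt (sub_neg.1 ?_)
  calc _ = k * (deriv (deriv u₁) x - deriv (deriv u₂) x) - l * (ε * τ * x ^ (-τ - 2)) := by
        rw [hkl, hfirst, mul_neg, ← sub_eq_add_neg]
    _ ≤ k * ((τ + 1) * (ε * τ * x ^ (-τ - 2))) - l * (ε * τ * x ^ (-τ - 2)) :=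
        sub_le_sub_right (mul_le_mul_of_nonneg_left hsecond (hG.lam_pos.le.trans hk.1)) _
    _ < 0 := by
        rw [← mul_assoc, sub_neg]
        exact mul_lt_mul_of_pos_right hkτ hq

/-! ### Existence of bounded solutions -/

/-- `u` is a bounded solution on `(0, 1]` of the Dirichlet problem
`G (u'') (u' / r) - β * u * r ^ (-γ) = f * r ^ (-γ)`, `u 1 = b`. -/
structure IsBddSolution (G : ℝ → ℝ → ℝ) (γ β : ℝ) (f : ℝ → ℝ) (b : ℝ) (u : ℝ → ℝ) : Prop where
  bddContOn : BddContOn (Ioc 0 1) u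
  contDiffOn : ContDiffOn ℝ 2 u (Ioo 0 1)
  eqn : ∀ r ∈ Ioo (0 : ℝ) 1,
    G (deriv (deriv u) r) (deriv u r / r) - β * u r * r ^ (-γ) = f r * r ^ (-γ)
  boundary : u 1 = b

section Solutions

variable {G : ℝ → ℝ → ℝ} {lam Lam n γ β b : ℝ} {f : ℝ → ℝ}

lemma IsBddSolution.sub_le (hG : RadiallyElliptic G lam Lam n) (hβ : 0 ≤ β) {f₁ f₂ u₁ u₂ : ℝ → ℝ}
    {b₁ b₂ η : ℝ} (hu₁ : IsBddSolution G γ β f₁ b₁ u₁) (hu₂ : IsBddSolution G γ β f₂ b₂ u₂)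
    (hf : ∀ r ∈ Ioo (0 : ℝ) 1, -(β * η) ≤ f₁ r - f₂ r) (hb : b₁ - b₂ ≤ η)
    {r : ℝ} (hr : r ∈ Ioc (0 : ℝ) 1) : u₁ r - u₂ r ≤ η := by
  refine hG.comparison hu₁.bddContOn hu₂.bddContOn hu₁.contDiffOn hu₂.contDiffOn
    (by rwa [hu₁.boundary, hu₂.boundary]) (fun x hx hη => ?_) hr
  have hrhs : 0 ≤ (β * (u₁ x - u₂ x) + (f₁ x - f₂ x)) * x ^ (-γ) := by
    refine mul_nonneg ?_ (Real.rpow_nonneg hx.1.le _)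
    linarith [mul_le_mul_of_nonneg_left hη.le hβ, hf x hx]
  linarith [hu₁.eqn x hx, hu₂.eqn x hx]

lemma IsBddSolution.eqOn (hG : RadiallyElliptic G lam Lam n) (hβ : 0 ≤ β) {u₁ u₂ : ℝ → ℝ}
    (hu₁ : IsBddSolution G γ β f b u₁) (hu₂ : IsBddSolution G γ β f b u₂) :
    EqOn u₁ u₂ (Ioc 0 1) := fun r hr =>
  le_antisymm
    (sub_nonpos.1 <| hu₁.sub_le hG hβ hu₂ (fun _ _ => by simp) (sub_self b).le hr)
    (sub_nonpos.1 <| hu₂.sub_le hG hβ hu₁ (fun _ _ => by simp) (sub_self b).le hr)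

lemma IsBddSolution.abs_sub_le (hG : RadiallyElliptic G lam Lam n) (hβ : 0 < β)
    {f₁ f₂ u₁ u₂ : ℝ → ℝ} (hu₁ : IsBddSolution G γ β f₁ b u₁)
    (hu₂ : IsBddSolution G γ β f₂ b u₂) {D : ℝ} (hD : 0 ≤ D)
    (hf : ∀ r ∈ Ioo (0 : ℝ) 1, |f₁ r - f₂ r| ≤ D) {r : ℝ} (hr : r ∈ Ioc (0 : ℝ) 1) :
    |u₁ r - u₂ r| ≤ D / β := by
  have hη : b - b ≤ D / β := (sub_self b).trans_le (div_nonneg hD hβ.le)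
  rw [abs_sub_le_iff]
  constructor
  · refine hu₁.sub_le hG hβ.le hu₂ (fun x hx => ?_) hη hr
    rw [mul_div_cancel₀ D hβ.ne']
    exact neg_le_of_abs_le (hf x hx)
  · refine hu₂.sub_le hG hβ.le hu₁ (fun x hx => ?_) hη hr
    rw [mul_div_cancel₀ D hβ.ne']
    exact neg_le_of_abs_le (abs_sub_comm (f₁ x) (f₂ x) ▸ hf x hx)

/-- The function with value `b` at `1` and derivative `r ^ (1 - γ) * q`. -/
def radialPotential (γ b : ℝ) (q : ℝ → ℝ) (r : ℝ) : ℝ := b + powPrimitive 1 (2 - γ) q r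

lemma hasDerivAt_radialPotential (hγ : γ < 2) {q : ℝ → ℝ} (hq : BddContOn (Ioo 0 1) q) {r : ℝ}
    (hr : r ∈ Ioo (0 : ℝ) 1) :
    HasDerivAt (radialPotential γ b q) (r ^ (1 - γ) * q r) r := by
  refine ((hasDerivAt_powPrimitive (sub_pos.2 hγ) unitInterval.one_mem hq hr).const_add
    b).congr_deriv ?_
  ring_nf

lemma bddContOn_radialPotential (hγ : γ < 2) {q : ℝ → ℝ} (hq : BddContOn (Ioo 0 1) q) :
    BddContOn (Icc 0 1) (radialPotential γ b q) :=
  (BddContOn.const b).add (bddContOn_powPrimitive (sub_pos.2 hγ) unitInterval.one_mem hq)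

lemma abs_radialPotential_sub_le (hγ : γ < 2) {q₁ q₂ : ℝ → ℝ} (hq₁ : BddContOn (Ioo 0 1) q₁)
    (hq₂ : BddContOn (Ioo 0 1) q₂) {E : ℝ} (hE : 0 ≤ E)
    (hq : ∀ r ∈ Ioo (0 : ℝ) 1, |q₁ r - q₂ r| ≤ E) {r : ℝ} (hr : r ∈ Icc (0 : ℝ) 1) :
    |radialPotential γ b q₁ r - radialPotential γ b q₂ r| ≤ E / (2 - γ) := by
  have hs : 0 < 2 - γ := sub_pos.2 hγ
  have hprim := abs_powPrimitive_sub_le hs unitInterval.one_mem (hq₁.sub hq₂) hE hq hr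
    unitInterval.one_mem
  rw [powPrimitive_self, sub_zero, Real.one_rpow] at hprim
  rw [radialPotential, radialPotential, add_sub_add_left_eq_sub,
    powPrimitive_sub_powPrimitive hs unitInterval.one_mem hq₁ hq₂ hr]
  refine hprim.trans (mul_le_of_le_one_right (by positivity) ?_)
  rw [abs_sub_comm, abs_of_nonneg (sub_nonneg.2 (Real.rpow_le_one hr.1 hr.2 hs.le))]
  exact sub_le_self _ (Real.rpow_nonneg hr.1 _)

lemma isBddSolution_radialPotential (hγ : γ < 2) {m : ℝ} {p q : ℝ → ℝ}
    (hp : BddContOn (Ioo 0 1) p) (hq : BddContOn (Ioo 0 1) q)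
    (hq' : ∀ r ∈ Ioo (0 : ℝ) 1, HasDerivAt q ((p r - (m + 1 - γ) * q r) / r) r)
    (hpq : ∀ r ∈ Ioo (0 : ℝ) 1,
      rescale γ G r (p r - m * q r) (q r) = β * radialPotential γ b q r + f r) :
    IsBddSolution G γ β f b (radialPotential γ b q) := by
  have hu' : ∀ r ∈ Ioo (0 : ℝ) 1,
      HasDerivAt (radialPotential γ b q) (r ^ (1 - γ) * q r) r := fun r hr =>
    hasDerivAt_radialPotential hγ hq hr
  have hexp {r : ℝ} (hr : 0 < r) : r ^ (1 - γ) = r ^ (-γ) * r := by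
    rw [← Real.rpow_add_one hr.ne', neg_add_eq_sub]
  have hu'' : ∀ r ∈ Ioo (0 : ℝ) 1,
      HasDerivAt (fun t => t ^ (1 - γ) * q t) (r ^ (-γ) * (p r - m * q r)) r := by
    intro r hr
    have hr0 : r ≠ 0 := hr.1.ne'
    refine ((Real.hasDerivAt_rpow_const (.inl hr0)).mul (hq' r hr)).congr_deriv ?_
    rw [show 1 - γ - 1 = -γ by ring, hexp hr.1]
    field_simp
    ring
  have hderiv2 : ∀ r ∈ Ioo (0 : ℝ) 1,
      deriv (deriv (radialPotential γ b q)) r = r ^ (-γ) * (p r - m * q r) := fun r hr =>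
    ((hu'' r hr).congr_of_eventuallyEq <| eventually_of_mem (Ioo_mem_nhds hr.1 hr.2)
      fun t ht => (hu' t ht).deriv).deriv
  refine ⟨(bddContOn_radialPotential hγ hq).mono Ioc_subset_Icc_self,
    contDiffOn_two_of_hasDerivAt_s11 isOpen_Ioo hu' hu'' ?_, fun r hr => ?_, ?_⟩
  · exact (continuousOn_rpow_const_of_pos (fun _ hr => hr.1) _).mul
      (hp.sub (hq.const_mul m)).continuousOn
  · have hGr := hpq r hr
    rw [rescale] at hGr
    have hcancel : r ^ (-γ) * r ^ γ = 1 := by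
      rw [← Real.rpow_add hr.1, neg_add_cancel, Real.rpow_zero]
    rw [hderiv2 r hr, (hu' r hr).deriv, hexp hr.1, mul_right_comm, mul_div_cancel_right₀ _ hr.1.ne']
    linear_combination r ^ (-γ) * hGr
      - G (r ^ (-γ) * (p r - m * q r)) (r ^ (-γ) * q r) * hcancel
  · rw [radialPotential, powPrimitive_self, add_zero]

/-- The relaxation map whose fixed points `p = r ^ γ * (u'' + m * (u' / r))` represent the solutions
`u = radialPotential γ b q`. Here `q = r ^ γ * (u' / r)` is recovered from `p` by integrating
`r * q' + (m + 1 - γ) * q = p`. -/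
def relaxation (G : ℝ → ℝ → ℝ) (Lam m γ β : ℝ) (f : ℝ → ℝ) (b : ℝ) (p : ℝ → ℝ) (r : ℝ) : ℝ :=
  let q := powMean (m + 1 - γ) p
  p r - (rescale γ G r (p r - m * q r) (q r) - β * radialPotential γ b q r - f r) / Lam

lemma RadiallyElliptic.bddContOn_relaxation (hG : RadiallyElliptic G lam Lam n) {m : ℝ}
    (hm : 0 < m + 1 - γ) (hγ0 : 0 ≤ γ) (hγ2 : γ < 2) (hf : BddContOn (Ioo 0 1) f) {p : ℝ → ℝ}
    (hp : BddContOn (Ioo 0 1) p) : BddContOn (Ioo 0 1) (relaxation G Lam m γ β f b p) := by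
  have hq : BddContOn (Ioo 0 1) (powMean (m + 1 - γ) p) := bddContOn_powMean hm hp
  have hu : BddContOn (Ioo 0 1) (radialPotential γ b (powMean (m + 1 - γ) p)) :=
    (bddContOn_radialPotential hγ2 hq).mono Ioo_subset_Icc_self
  have hGr := hG.bddContOn_rescale hγ0 (hp.sub (hq.const_mul m)) hq
  have hdiff := hp.sub (((hGr.sub (hu.const_mul β)).sub hf).const_mul Lam⁻¹)
  simp only [← div_eq_inv_mul] at hdiff
  exact hdiff

/- With `m = n * Lam / lam` the coefficients of `P`, `Q` and `U` in the relaxed increment are all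
nonnegative, so that their bounds add up without loss. -/
lemma RadiallyElliptic.abs_relaxed_increment_le (hG : RadiallyElliptic G lam Lam n) (hγ : γ < 2)
    (hβ0 : 0 ≤ β) (hβ : β ≤ lam * (2 - γ) ^ 2) {k l m P Q U E : ℝ} (hk : k ∈ Icc lam Lam)
    (hl : l ∈ Icc (n * lam) (n * Lam)) (hm : n * Lam ≤ m * lam) (hm0 : 0 ≤ m) (hE : 0 ≤ E)
    (hP : |P| ≤ (m + 1 - γ) * E) (hQ : |Q| ≤ E) (hU : |U| ≤ E / (2 - γ)) :
    |P - (k * (P - m * Q) + l * Q - β * U) / Lam|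
      ≤ (m + 1 - γ - (n * lam - Lam) / Lam) * E := by
  have hLam : 0 < Lam := hG.lam_pos.trans_le hG.lam_le
  have hs : 0 < 2 - γ := sub_pos.2 hγ
  have hcQ : 0 ≤ m * k - l :=
    sub_nonneg.2 ((hl.2.trans hm).trans (mul_le_mul_of_nonneg_left hk.1 hm0))
  have hβU : β * |U| ≤ lam * (2 - γ) * E := by
    calc β * |U| ≤ lam * (2 - γ) ^ 2 * (E / (2 - γ)) :=
        mul_le_mul hβ hU (abs_nonneg U) (hβ0.trans hβ)
      _ = lam * (2 - γ) * E := by field_simp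
  have hkγ : lam * (2 - γ) ≤ k * (2 - γ) := mul_le_mul_of_nonneg_right hk.1 hs.le
  have habs : |(Lam - k) * P + (m * k - l) * Q + β * U|
      ≤ (Lam - k) * |P| + (m * k - l) * |Q| + β * |U| := by
    refine (abs_add_three _ _ _).trans_eq ?_
    rw [abs_mul, abs_mul, abs_mul, abs_of_nonneg (sub_nonneg.2 hk.2), abs_of_nonneg hcQ,
      abs_of_nonneg hβ0]
  calc |P - (k * (P - m * Q) + l * Q - β * U) / Lam|
      = |(Lam - k) * P + (m * k - l) * Q + β * U| / Lam := by
        rw [← abs_of_pos hLam, ← abs_div, abs_of_pos hLam]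
        congr 1
        field_simp
        ring
    _ ≤ ((Lam - k) * ((m + 1 - γ) * E) + (m * k - l) * E + lam * (2 - γ) * E) / Lam := by
        refine div_le_div_of_nonneg_right (habs.trans ?_) hLam.le
        gcongr
        exact sub_nonneg.2 hk.2
    _ = (Lam * (m + 1 - γ) - (k * (1 - γ) + l - lam * (2 - γ))) / Lam * E := by ring
    _ ≤ (Lam * (m + 1 - γ) - (n * lam - Lam)) / Lam * E := by
        refine mul_le_mul_of_nonneg_right (div_le_div_of_nonneg_right ?_ hLam.le) hE
        linarith [hk.2, hl.1]
    _ = (m + 1 - γ - (n * lam - Lam) / Lam) * E := by field_simp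

lemma RadiallyElliptic.abs_relaxation_sub_le (hG : RadiallyElliptic G lam Lam n) (hγ : γ < 2)
    (hβ0 : 0 ≤ β) (hβ : β ≤ lam * (2 - γ) ^ 2) {m : ℝ} (hm : n * Lam ≤ m * lam)
    (hm0 : 0 < m) (hmγ : 0 < m + 1 - γ) {p₁ p₂ : ℝ → ℝ} (hp₁ : BddContOn (Ioo 0 1) p₁)
    (hp₂ : BddContOn (Ioo 0 1) p₂) {D : ℝ} (hD : 0 ≤ D)
    (hp : ∀ r ∈ Ioo (0 : ℝ) 1, |p₁ r - p₂ r| ≤ D) {r : ℝ} (hr : r ∈ Ioo (0 : ℝ) 1) :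
    |relaxation G Lam m γ β f b p₁ r - relaxation G Lam m γ β f b p₂ r|
      ≤ (1 - (n * lam - Lam) / Lam / (m + 1 - γ)) * D := by
  have hE : 0 ≤ D / (m + 1 - γ) := div_nonneg hD hmγ.le
  have hq : ∀ t ∈ Ioo (0 : ℝ) 1,
      |powMean (m + 1 - γ) p₁ t - powMean (m + 1 - γ) p₂ t| ≤ D / (m + 1 - γ) := fun t ht => by
    rw [powMean_sub_powMean hmγ hp₁ hp₂ (Ioo_subset_Icc_self ht)]
    exact abs_powMean_le hmγ (hp₁.sub hp₂) hD hp ht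
  obtain ⟨k, hk, l, hl, hkl⟩ := (hG.rescale γ hr.1).exists_slopes
    (p₁ r - m * powMean (m + 1 - γ) p₁ r) (powMean (m + 1 - γ) p₁ r)
    (p₂ r - m * powMean (m + 1 - γ) p₂ r) (powMean (m + 1 - γ) p₂ r)
  have hincr := hG.abs_relaxed_increment_le hγ hβ0 hβ hk hl hm hm0.le hE
    ((hp r hr).trans_eq (mul_div_cancel₀ D hmγ.ne').symm) (hq r hr)
    (abs_radialPotential_sub_le (b := b) hγ (bddContOn_powMean hmγ hp₁)
      (bddContOn_powMean hmγ hp₂) hE hq (Ioo_subset_Icc_self hr))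
  convert hincr using 1
  · simp only [relaxation]
    congr 1
    linear_combination -hkl / Lam
  · field_simp

theorem RadiallyElliptic.exists_isBddSolution_radialPotential (hG : RadiallyElliptic G lam Lam n)
    (hγ0 : 0 ≤ γ) (hγ2 : γ < 2) (hβ0 : 0 ≤ β) (hβ : β ≤ lam * (2 - γ) ^ 2)
    (hf : BddContOn (Ioo 0 1) f) (b : ℝ) :
    ∃ q, BddContOn (Ioo 0 1) q ∧ IsBddSolution G γ β f b (radialPotential γ b q) := by
  have hlam : 0 < lam := hG.lam_pos
  have hLam : 0 < Lam := hlam.trans_le hG.lam_le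
  obtain ⟨m, hm, hm1⟩ : ∃ m, n * Lam = m * lam ∧ 1 < m :=
    ⟨n * Lam / lam, (div_mul_cancel₀ _ hlam.ne').symm, (one_lt_div hlam).2
      (by nlinarith [hG.one_lt, hG.lam_le])⟩
  have hmγ : 0 < m + 1 - γ := by linarith
  have hκ : 1 - (n * lam - Lam) / Lam / (m + 1 - γ) < 1 :=
    sub_lt_self _ (div_pos (div_pos (sub_pos.2 hG.lt_mul) hLam) hmγ)
  obtain ⟨p, hp, hfix⟩ := BddContOn.exists_fixedPoint hκ (relaxation G Lam m γ β f b)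
    (fun p hp => hG.bddContOn_relaxation hmγ hγ0 hγ2 hf hp)
    fun p₁ p₂ hp₁ hp₂ D hD hp r hr =>
      hG.abs_relaxation_sub_le hγ2 hβ0 hβ hm.le (one_pos.trans hm1) hmγ hp₁ hp₂ hD hp hr
  have hq := bddContOn_powMean hmγ hp
  refine ⟨_, hq, isBddSolution_radialPotential hγ2 hp hq
    (fun r hr => hasDerivAt_powMean hmγ hp hr) fun r hr => ?_⟩
  have hzero := (div_eq_zero_iff.1 (sub_eq_self.1 (hfix hr))).resolve_right hLam.ne'
  linear_combination hzero

/-- Solvability of the Dirichlet problem for every bounded continuous right-hand side and every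
boundary value. -/
def Solvable (G : ℝ → ℝ → ℝ) (γ β : ℝ) : Prop :=
  ∀ f, BddContOn (Ioo 0 1) f → ∀ b, ∃ u, IsBddSolution G γ β f b u

lemma IsBddSolution.of_mul_add_eq {β₁ β₂ : ℝ} {f₁ f₂ u : ℝ → ℝ}
    (hu : IsBddSolution G γ β₁ f₁ b u)
    (h : ∀ r ∈ Ioo (0 : ℝ) 1, β₁ * u r + f₁ r = β₂ * u r + f₂ r) : IsBddSolution G γ β₂ f₂ b u :=
  ⟨hu.bddContOn, hu.contDiffOn,
    fun r hr => by linear_combination hu.eqn r hr + r ^ (-γ) * h r hr, hu.boundary⟩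

/- The solution operator at `β₁` is Lipschitz with constant `1 / β₁`, so moving `(β₂ - β₁) * u` to
the right-hand side gives a contraction. -/
lemma Solvable.of_lt_two_mul (hG : RadiallyElliptic G lam Lam n) {β₁ β₂ : ℝ}
    (h : Solvable G γ β₁) (hβ₁ : 0 < β₁) (hle : β₁ ≤ β₂) (hlt : β₂ < 2 * β₁) :
    Solvable G γ β₂ := by
  intro f hf b
  choose! S hS using fun g (hg : BddContOn (Ioo 0 1) g) =>
    h (fun r => f r + (β₂ - β₁) * g r) (hf.add (hg.const_mul _)) b
  have hκ : (β₂ - β₁) / β₁ < 1 := by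
    rw [div_lt_one hβ₁]
    linarith
  obtain ⟨g, hg, hfix⟩ := BddContOn.exists_fixedPoint hκ S
    (fun g hg => (hS g hg).bddContOn.mono Ioo_subset_Ioc_self)
    fun g₁ g₂ hg₁ hg₂ D hD hdist r hr => by
      rw [div_mul_eq_mul_div]
      refine (hS g₁ hg₁).abs_sub_le hG hβ₁ (hS g₂ hg₂) (mul_nonneg (sub_nonneg.2 hle) hD)
        (fun x hx => ?_) (Ioo_subset_Ioc_self hr)
      rw [add_sub_add_left_eq_sub, ← mul_sub, abs_mul, abs_of_nonneg (sub_nonneg.2 hle)]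
      exact mul_le_mul_of_nonneg_left (hdist x hx) (sub_nonneg.2 hle)
  refine ⟨S g, (hS g hg).of_mul_add_eq fun r hr => ?_⟩
  rw [hfix hr]
  ring

theorem RadiallyElliptic.solvable (hG : RadiallyElliptic G lam Lam n) (hγ0 : 0 ≤ γ) (hγ2 : γ < 2)
    (hβ : 0 ≤ β) : Solvable G γ β := by
  have hβ₀ : 0 < lam * (2 - γ) ^ 2 := mul_pos hG.lam_pos (pow_pos (sub_pos.2 hγ2) 2)
  have hind (j : ℕ) : ∀ β, 0 ≤ β → β ≤ (3 / 2) ^ j * (lam * (2 - γ) ^ 2) → Solvable G γ β := by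
    induction j with
    | zero =>
      intro β hβ hle f hf b
      rw [pow_zero, one_mul] at hle
      obtain ⟨q, -, hq⟩ := hG.exists_isBddSolution_radialPotential hγ0 hγ2 hβ hle hf b
      exact ⟨_, hq⟩
    | succ j ih =>
      intro β hβ hle
      rcases hβ.eq_or_lt with rfl | hβ
      · exact ih 0 le_rfl (by positivity)
      · rw [pow_succ] at hle
        exact (ih (2 / 3 * β) (by positivity) (by linarith)).of_lt_two_mul hG (by positivity)
          (by linarith) (by linarith)
  obtain ⟨j, hj⟩ := pow_unbounded_of_one_lt (β / (lam * (2 - γ) ^ 2))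
    (by norm_num : (1 : ℝ) < 3 / 2)
  exact hind j β hβ ((div_le_iff₀ hβ₀).1 hj.le)

lemma IsBddSolution.exists_eqOn_radialPotential (hG : RadiallyElliptic G lam Lam n) (hγ0 : 0 ≤ γ)
    (hγ2 : γ < 2) {u : ℝ → ℝ} (hf : BddContOn (Ioo 0 1) f) (hu : IsBddSolution G γ β f b u) :
    ∃ q, BddContOn (Ioo 0 1) q ∧ EqOn (radialPotential γ b q) u (Ioc 0 1) := by
  have hrhs : BddContOn (Ioo 0 1) fun r => f r + β * u r :=
    hf.add ((hu.bddContOn.mono Ioo_subset_Ioc_self).const_mul β)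
  have hlam : 0 ≤ lam * (2 - γ) ^ 2 := mul_nonneg hG.lam_pos.le (sq_nonneg _)
  obtain ⟨q, hq, hsol⟩ := hG.exists_isBddSolution_radialPotential hγ0 hγ2 le_rfl hlam hrhs b
  exact ⟨q, hq, hsol.eqOn hG le_rfl (hu.of_mul_add_eq fun r _ => by ring)⟩

end Solutions

/-! ### Uniformly elliptic operators -/

lemma exists_mem_Icc_sub_eq_mul {g : ℝ → ℝ} {c C : ℝ} (hcC : c ≤ C)
    (hg : ∀ x p, 0 ≤ p → c * p ≤ g (x + p) - g x ∧ g (x + p) - g x ≤ C * p) (x y : ℝ) :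
    ∃ k ∈ Icc c C, g x - g y = k * (x - y) := by
  wlog hyx : y ≤ x generalizing x y
  · obtain ⟨k, hk, hxy⟩ := this y x (not_le.1 hyx).le
    exact ⟨k, hk, by linear_combination -hxy⟩
  rcases hyx.eq_or_lt with rfl | hyx
  · exact ⟨c, left_mem_Icc.2 hcC, by ring⟩
  have hpos : 0 < x - y := sub_pos.2 hyx
  obtain ⟨hlow, hupp⟩ := hg y (x - y) hpos.le
  rw [add_sub_cancel] at hlow hupp
  exact ⟨(g x - g y) / (x - y), ⟨(le_div_iff₀ hpos).2 hlow, (div_le_iff₀ hpos).2 hupp⟩,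
    (div_mul_cancel₀ _ hpos.ne').symm⟩

lemma dmat_add (N : ℕ) (a b p q : ℝ) : Dmat N (a + p) (b + q) = Dmat N a b + Dmat N p q := by
  rw [Dmat, Dmat, Dmat, Matrix.diagonal_add]
  congr 1
  funext i
  split_ifs <;> rfl

lemma trace_dmat {N : ℕ} (hN : 0 < N) (p q : ℝ) :
    (Dmat N p q).trace = p + ((N : ℝ) - 1) * q := by
  obtain ⟨M, rfl⟩ := Nat.exists_eq_succ_of_ne_zero hN.ne'
  rw [Dmat, Matrix.trace_diagonal, Fin.sum_univ_succ]
  simp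

lemma posSemidef_dmat (N : ℕ) {p q : ℝ} (hp : 0 ≤ p) (hq : 0 ≤ q) : (Dmat N p q).PosSemidef := by
  refine Matrix.PosSemidef.diagonal fun i => ?_
  rw [Pi.zero_apply]
  split_ifs <;> assumption

lemma UnifElliptic.radiallyElliptic {N : ℕ} {lam Lam : ℝ} {F : Matrix (Fin N) (Fin N) ℝ → ℝ}
    (hF : UnifElliptic N lam Lam F) (hlam : 0 < lam) (hle : lam ≤ Lam)
    (hN : 2 < lam / Lam * ((N : ℝ) - 1) + 1) :
    RadiallyElliptic (fun a y => F (Dmat N a y)) lam Lam ((N : ℝ) - 1) := by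
  have hLam : 0 < Lam := hlam.trans_le hle
  have hlt : Lam < ((N : ℝ) - 1) * lam := by
    rw [← one_lt_div hLam, mul_comm, mul_div_right_comm]
    linarith
  have hN1 : 0 < (N : ℝ) - 1 := pos_of_mul_pos_left (hLam.trans hlt) hlam.le
  have hN0 : 0 < N := by exact_mod_cast one_pos.trans (sub_pos.1 hN1)
  have hincr (a y : ℝ) {p q : ℝ} (hp : 0 ≤ p) (hq : 0 ≤ q) :
      lam * (p + ((N : ℝ) - 1) * q) ≤ F (Dmat N (a + p) (y + q)) - F (Dmat N a y) ∧
        F (Dmat N (a + p) (y + q)) - F (Dmat N a y) ≤ Lam * (p + ((N : ℝ) - 1) * q) := by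
    rw [dmat_add, ← trace_dmat hN0]
    exact hF _ _ (Matrix.isSymm_diagonal _) (posSemidef_dmat N hp hq)
  refine ⟨hlam, hlt, fun a y a' y' => ?_⟩
  obtain ⟨k, hk, hka⟩ := exists_mem_Icc_sub_eq_mul (g := fun a => F (Dmat N a y)) hle
    (fun x p hp => by simpa using hincr x y hp le_rfl) a a'
  obtain ⟨l, hl, hly⟩ := exists_mem_Icc_sub_eq_mul (g := fun y => F (Dmat N a' y))
    (mul_le_mul_of_nonneg_left hle hN1.le)
    (fun x p hp => by simpa [mul_left_comm, mul_assoc] using hincr a' x le_rfl hp) y y'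
  exact ⟨k, hk, l, hl, by linear_combination hka + hly⟩

end

theorem stmt11_general (N : ℕ) (lam Lam : ℝ) (hlam : 0 < lam) (hlL : lam ≤ Lam)
    (hNp : 2 < lam / Lam * ((N : ℝ) - 1) + 1)
    (F : Matrix (Fin N) (Fin N) ℝ → ℝ)
    (hF1 : UnifElliptic N lam Lam F) (γ : ℝ) (hγ0 : 0 ≤ γ) (hγ2 : γ < 2)
    (f : ℝ → ℝ) (hfc : ContinuousOn f (Ioo 0 1))
    (hfb : ∃ C : ℝ, ∀ r ∈ Ioo (0 : ℝ) 1, |f r| ≤ C)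
    (β : ℝ) (hβ : 0 ≤ β) (b : ℝ) :
    ∃ u : ℝ → ℝ,
      ((∃ C : ℝ, ∀ r ∈ Ioc (0 : ℝ) 1, |u r| ≤ C) ∧
        ContinuousOn u (Ioc 0 1) ∧ ContDiffOn ℝ 2 u (Ioo 0 1) ∧
        (∀ r ∈ Ioo (0 : ℝ) 1,
          F (Dmat N (deriv (deriv u) r) (deriv u r / r)) - β * u r * r ^ (-γ)
            = f r * r ^ (-γ)) ∧
        u 1 = b) ∧
      (∀ w : ℝ → ℝ,
        ((∃ C : ℝ, ∀ r ∈ Ioc (0 : ℝ) 1, |w r| ≤ C) ∧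
          ContinuousOn w (Ioc 0 1) ∧ ContDiffOn ℝ 2 w (Ioo 0 1) ∧
          (∀ r ∈ Ioo (0 : ℝ) 1,
            F (Dmat N (deriv (deriv w) r) (deriv w r / r)) - β * w r * r ^ (-γ)
              = f r * r ^ (-γ)) ∧
          w 1 = b) → EqOn w u (Ioc 0 1)) ∧
      ∃ v : ℝ → ℝ, EqOn v u (Ioc 0 1) ∧ ContinuousOn v (Icc 0 1) ∧
        (γ < 1 → ContDiffOn ℝ 1 v (Ico 0 1)) ∧
        (γ ≤ 1 → ∃ K : ℝ, ∀ x ∈ Icc (0 : ℝ) 1, ∀ y ∈ Icc (0 : ℝ) 1,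
          |v x - v y| ≤ K * |x - y|) ∧
        (1 < γ → ∃ C : ℝ, ∀ x ∈ Icc (0 : ℝ) 1, ∀ y ∈ Icc (0 : ℝ) 1,
          |v x - v y| ≤ C * |x - y| ^ (2 - γ)) := by
  have hG := hF1.radiallyElliptic hlam hlL hNp
  have hf : BddContOn (Ioo 0 1) f := ⟨hfc, hfb⟩
  obtain ⟨u, hu⟩ := hG.solvable hγ0 hγ2 hβ f hf b
  obtain ⟨q, hq, hqu⟩ := hu.exists_eqOn_radialPotential hG hγ0 hγ2 hf
  have hone : (1 : ℝ) ∈ Icc 0 1 := unitInterval.one_mem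
  refine ⟨u, ⟨hu.bddContOn.bounded, hu.bddContOn.continuousOn, hu.contDiffOn, hu.eqn, hu.boundary⟩,
    fun w ⟨hwb, hwc, hwd, hweqn, hw1⟩ =>
      IsBddSolution.eqOn hG hβ ⟨⟨hwc, hwb⟩, hwd, hweqn, hw1⟩ hu,
    radialPotential γ b q, hqu, (bddContOn_radialPotential hγ2 hq).continuousOn,
    fun hγ => contDiffOn_const.add (contDiffOn_powPrimitive (by linarith) hone hq), fun hγ => ?_,
    fun hγ => ?_⟩
  · simpa only [radialPotential, add_sub_add_left_eq_sub] using
      abs_powPrimitive_sub_le_mul_abs_sub (by linarith) hone hq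
  · simpa only [radialPotential, add_sub_add_left_eq_sub] using
      abs_powPrimitive_sub_le_mul_abs_sub_rpow (sub_pos.2 hγ2) (by linarith) hone hq

theorem stmt11 (N : ℕ) (hN : 2 ≤ N) (lam Lam : ℝ) (hlam : 0 < lam) (hlL : lam ≤ Lam)
    (hNp : 2 < lam / Lam * ((N : ℝ) - 1) + 1)
    (F : Matrix (Fin N) (Fin N) ℝ → ℝ)
    (hF1 : UnifElliptic N lam Lam F) (hF2 : RotInvariant N F) (hF3 : PosHomog N F)
    (γ : ℝ) (hγ0 : 0 < γ) (hγ2 : γ < 2)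
    (f : ℝ → ℝ) (hfc : ContinuousOn f (Ioo 0 1))
    (hfb : ∃ C : ℝ, ∀ r ∈ Ioo (0:ℝ) 1, |f r| ≤ C)
    (β : ℝ) (hβ : 0 ≤ β) (b : ℝ) :
    ∃ u : ℝ → ℝ,
      ((∃ C : ℝ, ∀ r ∈ Ioc (0:ℝ) 1, |u r| ≤ C) ∧
        ContinuousOn u (Ioc 0 1) ∧ ContDiffOn ℝ 2 u (Ioo 0 1) ∧
        (∀ r ∈ Ioo (0:ℝ) 1,
          F (Dmat N (deriv (deriv u) r) (deriv u r / r)) - β * u r * r ^ (-γ)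
            = f r * r ^ (-γ)) ∧
        u 1 = b) ∧
      (∀ w : ℝ → ℝ,
        ((∃ C : ℝ, ∀ r ∈ Ioc (0:ℝ) 1, |w r| ≤ C) ∧
          ContinuousOn w (Ioc 0 1) ∧ ContDiffOn ℝ 2 w (Ioo 0 1) ∧
          (∀ r ∈ Ioo (0:ℝ) 1,
            F (Dmat N (deriv (deriv w) r) (deriv w r / r)) - β * w r * r ^ (-γ)
              = f r * r ^ (-γ)) ∧
          w 1 = b) → EqOn w u (Ioc 0 1)) ∧
      ∃ v : ℝ → ℝ, EqOn v u (Ioc 0 1) ∧ ContinuousOn v (Icc 0 1) ∧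
        (γ < 1 → ContDiffOn ℝ 1 v (Ico 0 1)) ∧
        (γ ≤ 1 → ∃ K : ℝ, ∀ x ∈ Icc (0:ℝ) 1, ∀ y ∈ Icc (0:ℝ) 1,
          |v x - v y| ≤ K * |x - y|) ∧
        (1 < γ → ∃ C : ℝ, ∀ x ∈ Icc (0:ℝ) 1, ∀ y ∈ Icc (0:ℝ) 1,
          |v x - v y| ≤ C * |x - y| ^ (2 - γ)) :=
  stmt11_general N lam Lam hlam hlL hNp F hF1 γ hγ0.le hγ2 f hfc hfb β hβ b

end
end
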